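/- arXiv:1909.03668 — 7 statements merged into one kernel-verified Lean document; each statement's English description precedes it below -/
import Mathlib

section
/- For all real δ ≥ 0 and D ≥ 1 there exists a constant X₀ ≥ 0, depending only on δ and D, with the following property. Let E be a metric space such that (i) any two points u, v ∈ E are joined by a geodesic, i.e. there is f : [0, dist(u,v)] → E with f(0) = u, f(dist(u,v)) = v and dist(f(s), f(t)) = |s − t| for all s, t; and (ii) for every basepoint p ∈ E and all a, b, c ∈ E, (a·c)_p ≥ min((a·b)_p, (b·c)_p) − 2δ. Let γ, w ∈ E, K ∈ ℝ, T ≥ 0, and let q : [0,T] → E be a D-quasi-geodesic, i.e. D⁻¹|s − t| − D ≤ dist(q(s), q(t)) ≤ D|s − t| + D for all s, t ∈ [0,T]. If (w·q(0))_γ ≥ K and (w·q(T))_γ ≥ K, then (w·q(s))_γ ≥ K − X₀ for every s ∈ [0,T]. -/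
noncomputable def QGgp {E : Type} [MetricSpace E] (p a b : E) : ℝ := (dist p a + dist p b - dist a b) / 2

theorem QG_chain {E : Type} [MetricSpace E] (η : ℝ) (hη : 0 ≤ η)
    (hyp : ∀ p a b c : E, min (QGgp p a b) (QGgp p b c) - η ≤ QGgp p a c) (p : E) (c : ℝ) (k : ℕ) :
    ∀ x : ℕ → E, (∀ i < 2 ^ k, c ≤ QGgp p (x i) (x (i + 1))) →
      c - k * η ≤ QGgp p (x 0) (x (2 ^ k)) := by
  induction k with
  | zero => intro x h; simpa using h 0 (by norm_num)
  | succ k ih =>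
    intro x h
    have h1 := ih x (fun i hi => h i (by rw [pow_succ]; omega))
    have h2 := ih (fun i => x (2 ^ k + i)) (fun i hi => by
      have := h (2 ^ k + i) (by rw [pow_succ]; omega)
      simpa [add_assoc] using this)
    have h3 := hyp p (x 0) (x (2 ^ k)) (x (2 ^ (k + 1)))
    have e : (2 : ℕ) ^ k + 2 ^ k = 2 ^ (k + 1) := by rw [pow_succ]; omega
    simp only [add_zero, e] at h2
    have := le_min h1 h2
    push_cast
    linarith

theorem QG_path {E : Type} [MetricSpace E] (η D : ℝ) (hη : 0 ≤ η) (hD : 1 ≤ D)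
    (hyp : ∀ p a b c : E, min (QGgp p a b) (QGgp p b c) - η ≤ QGgp p a c) (T : ℝ) (q : ℝ → E)
    (hq : ∀ s ∈ Set.Icc (0 : ℝ) T, ∀ t ∈ Set.Icc (0 : ℝ) T, dist (q s) (q t) ≤ D * |s - t| + D)
    (p : E) (r : ℝ) (hr : ∀ t ∈ Set.Icc (0 : ℝ) T, r ≤ dist p (q t))
    (t t' : ℝ) (ht : t ∈ Set.Icc (0 : ℝ) T) (ht' : t' ∈ Set.Icc (0 : ℝ) T)
    (k : ℕ) (hk : |t - t'| ≤ 2 ^ k) : r - D - k * η ≤ QGgp p (q t) (q t') := by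
  have hpos : (0 : ℝ) < 2 ^ k := by positivity
  have mem : ∀ i : ℕ, i ≤ 2 ^ k → t + (i / 2 ^ k : ℝ) * (t' - t) ∈ Set.Icc (0 : ℝ) T := by
    intro i hi
    have h1 : (i / 2 ^ k : ℝ) ≤ 1 := by
      rw [div_le_one hpos]; exact_mod_cast hi
    have h0 : (0 : ℝ) ≤ (i / 2 ^ k : ℝ) := by positivity
    have := (convex_Icc (0 : ℝ) T) ht ht' (sub_nonneg.2 h1) h0 (by ring)
    simp only [smul_eq_mul] at this
    convert this using 1
    ring
  have := QG_chain η hη hyp p (r - D) k (fun i => q (t + (i / 2 ^ k : ℝ) * (t' - t))) (by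
    intro i hi
    have m1 := mem i hi.le
    have m2 := mem (i + 1) hi
    have a1 := hr _ m1
    have a2 := hr _ m2
    have a3 := hq _ m1 _ m2
    have e : |(t + (i / 2 ^ k : ℝ) * (t' - t)) - (t + (((i + 1 : ℕ) : ℝ) / 2 ^ k) * (t' - t))| ≤ 1 := by
      have : (t + (i / 2 ^ k : ℝ) * (t' - t)) - (t + (((i + 1 : ℕ) : ℝ) / 2 ^ k) * (t' - t))
        = (t - t') / 2 ^ k := by push_cast; field_simp; ring
      rw [this, abs_div, abs_of_pos hpos, div_le_one hpos]; exact hk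
    have := mul_le_mul_of_nonneg_left e (by linarith : 0 ≤ D)
    simp only [QGgp]
    linarith)
  simpa using this

theorem QG_const (D η C : ℝ) (hη : 0 < η) (hC : 0 ≤ C) (hD : 1 ≤ D) :
    ∃ H : ℝ, 0 ≤ H ∧ ∀ r : ℝ, (∀ k : ℕ, D * (6 * r + 2 + D) ≤ 2 ^ k → r ≤ C + k * η) → r ≤ H := by
  have lim : Filter.Tendsto (fun k : ℕ => ((k : ℝ) ^ 1 / 2 ^ k)) Filter.atTop (nhds 0) :=
    tendsto_pow_const_div_const_pow_of_one_lt 1 (by norm_num)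
  obtain ⟨A, hA⟩ : ∃ A, A = D * (6 * (C + η) + 2 + D) := ⟨_, rfl⟩
  have hA0 : 0 ≤ A := by rw [hA]; positivity
  have hB0 : 0 < A + D * 6 * η := by positivity
  have ev := lim.eventually (gt_mem_nhds (show (0 : ℝ) < 1 / (A + D * 6 * η) by positivity))
  obtain ⟨k0, hk0⟩ := Filter.eventually_atTop.1 ev
  refine ⟨C + (k0 + 1) * η, by positivity, fun r hr => ?_⟩
  by_contra! hlt
  obtain ⟨n, hn⟩ : ∃ n, n = ⌈(r - C) / η⌉₊ := ⟨_, rfl⟩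
  have h1 : (r - C) / η ≤ n := hn ▸ Nat.le_ceil _
  have hx : (k0 + 1 : ℝ) < (r - C) / η := by rw [lt_div_iff₀ hη]; linarith
  have h2 : (n : ℝ) < (r - C) / η + 1 := by
    rw [hn]; exact Nat.ceil_lt_add_one (le_trans (by positivity) hx.le)
  have h3 : k0 + 1 < n := by
    have : (k0 + 1 : ℝ) < n := lt_of_lt_of_le hx h1
    exact_mod_cast this
  obtain ⟨k, rfl⟩ : ∃ k, n = k + 1 := ⟨n - 1, by omega⟩
  push_cast at h1 h2
  rw [div_le_iff₀ hη] at h1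
  have h2' : (k : ℝ) < (r - C) / η := by linarith
  rw [lt_div_iff₀ hη] at h2'
  have h4 := hk0 k (by omega)
  rw [pow_one, div_lt_div_iff₀ (by positivity) hB0] at h4
  have hk1 : (1 : ℝ) ≤ k := by
    have : 1 ≤ k := by omega
    exact_mod_cast this
  have h5 : D * (6 * r + 2 + D) ≤ 2 ^ k := by
    have : D * (6 * r + 2 + D) ≤ D * (6 * (C + (k + 1) * η) + 2 + D) := by
      apply mul_le_mul_of_nonneg_left _ (by linarith)
      linarith
    have : A * 1 ≤ A * k := mul_le_mul_of_nonneg_left hk1 hA0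
    have : D * (6 * (C + (k + 1) * η) + 2 + D) = A + D * 6 * η * k := by rw [hA]; ring
    linarith
  have := hr k h5
  linarith

theorem QG_tgap (D d x : ℝ) (hD : 1 ≤ D) (h : D⁻¹ * x - D ≤ d) : x ≤ D * (d + D) := by
  have h0 : 0 < D := by linarith
  have : D⁻¹ * x ≤ d + D := by linarith
  rwa [inv_mul_le_iff₀ h0] at this

/-- Points of the geodesic are close to the quasi-geodesic. -/
theorem QG_morse1 {E : Type} [MetricSpace E] (η D H : ℝ) (hη : 0 ≤ η) (hD : 1 ≤ D)
    (hH : ∀ r : ℝ, (∀ k : ℕ, D * (6 * r + 2 + D) ≤ 2 ^ k → r ≤ (1 + D + 2 * η) + k * η) → r ≤ H)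
    (hyp : ∀ p a b c : E, min (QGgp p a b) (QGgp p b c) - η ≤ QGgp p a c)
    (T : ℝ) (hT : 0 ≤ T) (q : ℝ → E)
    (hq : ∀ s ∈ Set.Icc (0 : ℝ) T, ∀ t ∈ Set.Icc (0 : ℝ) T,
              D⁻¹ * |s - t| - D ≤ dist (q s) (q t) ∧
                dist (q s) (q t) ≤ D * |s - t| + D)
    (L : ℝ) (hL : 0 ≤ L) (f : ℝ → E) (f0 : f 0 = q 0) (fL : f L = q T)
    (hf : ∀ s ∈ Set.Icc (0 : ℝ) L, ∀ t ∈ Set.Icc (0 : ℝ) L, dist (f s) (f t) = |s - t|) :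
    ∀ u ∈ Set.Icc (0 : ℝ) L, ∃ t ∈ Set.Icc (0 : ℝ) T, dist (f u) (q t) ≤ H + 1 := by
  have m0 : (0 : ℝ) ∈ Set.Icc (0 : ℝ) T := ⟨le_rfl, hT⟩
  have mT : T ∈ Set.Icc (0 : ℝ) T := ⟨hT, le_rfl⟩
  have n0 : (0 : ℝ) ∈ Set.Icc (0 : ℝ) L := ⟨le_rfl, hL⟩
  have nL : L ∈ Set.Icc (0 : ℝ) L := ⟨hL, le_rfl⟩
  obtain ⟨Q, hQ⟩ : ∃ Q, Q = q '' Set.Icc (0 : ℝ) T := ⟨_, rfl⟩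
  have hQne : Q.Nonempty := ⟨q 0, hQ ▸ ⟨0, m0, rfl⟩⟩
  have hQm : ∀ t ∈ Set.Icc (0 : ℝ) T, q t ∈ Q := fun t ht => hQ ▸ ⟨t, ht, rfl⟩
  obtain ⟨S, hS⟩ : ∃ S, S = (fun u => Metric.infDist (f u) Q) '' Set.Icc (0 : ℝ) L := ⟨_, rfl⟩
  have hSne : S.Nonempty := by rw [hS]; exact ⟨_, 0, n0, rfl⟩
  have hSb : BddAbove S := by
    refine ⟨L, ?_⟩
    rw [hS]
    rintro _ ⟨u, hu, rfl⟩
    have h1 := Metric.infDist_le_dist_of_mem (x := f u) (hQm 0 m0)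
    have h2 := hf u hu 0 n0
    rw [f0, sub_zero, abs_of_nonneg hu.1] at h2
    have := hu.2
    show Metric.infDist (f u) Q ≤ L
    linarith
  obtain ⟨r, hr⟩ : ∃ r, r = sSup S := ⟨_, rfl⟩
  have hle : ∀ u ∈ Set.Icc (0 : ℝ) L, Metric.infDist (f u) Q ≤ r := fun u hu =>
    hr ▸ le_csSup hSb (hS ▸ ⟨u, hu, rfl⟩)
  have hr0 : 0 ≤ r := Metric.infDist_nonneg.trans (hle 0 n0)
  have near : ∀ u ∈ Set.Icc (0 : ℝ) L, ∃ t ∈ Set.Icc (0 : ℝ) T, dist (f u) (q t) ≤ r + 1 := by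
    intro u hu
    obtain ⟨y, hy, hd⟩ := (Metric.infDist_lt_iff (r := r + 1) hQne).1
      (lt_of_le_of_lt (hle u hu) (by linarith))
    rw [hQ] at hy
    obtain ⟨t, ht, rfl⟩ := hy
    exact ⟨t, ht, hd.le⟩
  suffices r ≤ H by
    intro u hu
    obtain ⟨t, ht, h⟩ := near u hu
    exact ⟨t, ht, by linarith⟩
  obtain ⟨_, hx, hlt⟩ := exists_lt_of_lt_csSup hSne (show r - 1 < sSup S by rw [← hr]; linarith)
  rw [hS] at hx
  obtain ⟨v, hv, rfl⟩ := hx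
  have hlt : r - 1 < Metric.infDist (f v) Q := hlt
  have far : ∀ t ∈ Set.Icc (0 : ℝ) T, r - 1 ≤ dist (f v) (q t) := fun t ht =>
    hlt.le.trans (Metric.infDist_le_dist_of_mem (hQm t ht))
  have hv1 := hv.1
  have hv2 := hv.2
  have left : ∃ u ∈ Set.Icc (0 : ℝ) L, u ≤ v ∧ v - u ≤ 2 * r ∧ ∃ t ∈ Set.Icc (0 : ℝ) T,
      dist (f u) (q t) ≤ r + 1 ∧ r - 1 ≤ QGgp (f v) (f u) (q t) := by
    by_cases h : 0 ≤ v - 2 * r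
    · have hu : v - 2 * r ∈ Set.Icc (0 : ℝ) L := ⟨h, by linarith⟩
      obtain ⟨t, ht, hd⟩ := near _ hu
      refine ⟨_, hu, by linarith, by linarith, t, ht, hd, ?_⟩
      have h1 := far t ht
      have h2 := hf v hv _ hu
      rw [show v - (v - 2 * r) = 2 * r by ring, abs_of_nonneg (by linarith)] at h2
      simp only [QGgp]
      linarith
    · refine ⟨0, n0, hv1, by linarith, 0, m0, ?_, ?_⟩
      · rw [f0, dist_self]; linarith
      · have := far 0 m0
        simp only [QGgp, f0, dist_self]; linarith
  have right : ∃ u ∈ Set.Icc (0 : ℝ) L, v ≤ u ∧ u - v ≤ 2 * r ∧ ∃ t ∈ Set.Icc (0 : ℝ) T,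
      dist (f u) (q t) ≤ r + 1 ∧ r - 1 ≤ QGgp (f v) (q t) (f u) := by
    by_cases h : v + 2 * r ≤ L
    · have hu : v + 2 * r ∈ Set.Icc (0 : ℝ) L := ⟨by linarith, h⟩
      obtain ⟨t, ht, hd⟩ := near _ hu
      refine ⟨_, hu, by linarith, by linarith, t, ht, hd, ?_⟩
      have h1 := far t ht
      have h2 := hf v hv _ hu
      rw [show v - (v + 2 * r) = -(2 * r) by ring, abs_neg, abs_of_nonneg (by linarith)] at h2
      simp only [QGgp]
      rw [dist_comm (q t)]
      linarith
    · refine ⟨L, nL, hv2, by linarith, T, mT, ?_, ?_⟩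
      · rw [fL, dist_self]; linarith
      · have := far T mT
        simp only [QGgp, fL, dist_self]; linarith
  obtain ⟨u1, hu1, l1, l2, t1, ht1, l3, l4⟩ := left
  obtain ⟨u2, hu2, r1, r2, t2, ht2, r3, r4⟩ := right
  have d12 := hf u1 hu1 u2 hu2
  have dv1 := hf v hv u1 hu1
  have dv2 := hf v hv u2 hu2
  rw [abs_of_nonpos (by linarith)] at d12 dv2
  rw [abs_of_nonneg (by linarith)] at dv1
  have dq : dist (q t1) (q t2) ≤ 6 * r + 2 := by
    have := dist_triangle4 (q t1) (f u1) (f u2) (q t2)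
    rw [dist_comm (q t1) (f u1)] at this
    linarith
  have gap := QG_tgap D (6 * r + 2) _ hD ((hq t1 ht1 t2 ht2).1.trans dq)
  apply hH
  intro k hk
  have hp := QG_path η D hη hD hyp T q (fun s hs t ht => (hq s hs t ht).2) (f v) (r - 1) far
    t1 t2 ht1 ht2 k (gap.trans hk)
  have e1 := hyp (f v) (f u1) (q t1) (q t2)
  have e2 := hyp (f v) (f u1) (q t2) (f u2)
  have z : QGgp (f v) (f u1) (f u2) = 0 := by
    simp only [QGgp]; linarith
  have hkη : 0 ≤ (k : ℝ) * η := by positivity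
  have i1 : r - 1 - D - k * η ≤ min (QGgp (f v) (f u1) (q t1)) (QGgp (f v) (q t1) (q t2)) :=
    le_min (by linarith) hp
  have i2 : r - 1 - D - k * η - η ≤ min (QGgp (f v) (f u1) (q t2)) (QGgp (f v) (q t2) (f u2)) :=
    le_min (by linarith) (by linarith)
  linarith

/-- Points of the quasi-geodesic are close to the geodesic. -/
theorem QG_morse2 {E : Type} [MetricSpace E] (D H : ℝ) (hD : 1 ≤ D) (hH : 0 ≤ H)
    (T : ℝ) (hT : 0 ≤ T) (q : ℝ → E)
    (hq : ∀ s ∈ Set.Icc (0 : ℝ) T, ∀ t ∈ Set.Icc (0 : ℝ) T,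
              D⁻¹ * |s - t| - D ≤ dist (q s) (q t) ∧
                dist (q s) (q t) ≤ D * |s - t| + D)
    (L : ℝ) (hL : 0 ≤ L) (f : ℝ → E) (f0 : f 0 = q 0) (fL : f L = q T)
    (hf : ∀ s ∈ Set.Icc (0 : ℝ) L, ∀ t ∈ Set.Icc (0 : ℝ) L, dist (f s) (f t) = |s - t|)
    (near : ∀ u ∈ Set.Icc (0 : ℝ) L, ∃ t ∈ Set.Icc (0 : ℝ) T, dist (f u) (q t) ≤ H)
    (s : ℝ) (hs : s ∈ Set.Icc (0 : ℝ) T) :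
    ∃ u ∈ Set.Icc (0 : ℝ) L, dist (q s) (f u) ≤ D * (D * (2 * H + 2 + D)) + D + H := by
  have m0 : (0 : ℝ) ∈ Set.Icc (0 : ℝ) T := ⟨le_rfl, hT⟩
  have mT : T ∈ Set.Icc (0 : ℝ) T := ⟨hT, le_rfl⟩
  have n0 : (0 : ℝ) ∈ Set.Icc (0 : ℝ) L := ⟨le_rfl, hL⟩
  have nL : L ∈ Set.Icc (0 : ℝ) L := ⟨hL, le_rfl⟩
  obtain ⟨S, hS⟩ : ∃ S : Set ℝ, S = {u | u ∈ Set.Icc (0 : ℝ) L ∧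
    ∃ t ∈ Set.Icc (0 : ℝ) T, t ≤ s ∧ dist (f u) (q t) ≤ H} := ⟨_, rfl⟩
  have hS0 : (0 : ℝ) ∈ S := by
    rw [hS]; exact ⟨n0, 0, m0, hs.1, by rw [f0, dist_self]; exact hH⟩
  have hSb : BddAbove S := ⟨L, by rw [hS]; exact fun u hu => hu.1.2⟩
  obtain ⟨a, ha, hlt⟩ := exists_lt_of_lt_csSup ⟨0, hS0⟩ (show sSup S - 1 < sSup S by linarith)
  have haS := ha
  rw [hS] at ha
  obtain ⟨haL, t1, ht1, h1s, hd1⟩ := ha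
  have hb : ∃ b ∈ Set.Icc (0 : ℝ) L, |a - b| ≤ 2 ∧
      ∃ t ∈ Set.Icc (0 : ℝ) T, s ≤ t ∧ dist (f b) (q t) ≤ H := by
    have hale := le_csSup hSb haS
    have := haL.1
    by_cases h : sSup S + 1 ≤ L
    · have hm : sSup S + 1 ∈ Set.Icc (0 : ℝ) L := ⟨by linarith, h⟩
      refine ⟨_, hm, by rw [abs_le]; constructor <;> linarith, ?_⟩
      obtain ⟨t, ht, hd⟩ := near _ hm
      refine ⟨t, ht, ?_, hd⟩
      by_contra! hc
      have : sSup S + 1 ∈ S := by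
        rw [hS] at hm ⊢
        exact ⟨hm, t, ht, hc.le, by rw [← hS]; exact hd⟩
      have := le_csSup hSb this
      linarith
    · have := haL.2
      exact ⟨L, nL, by rw [abs_le]; constructor <;> linarith, T, mT, hs.2,
        by rw [fL, dist_self]; exact hH⟩
  obtain ⟨b, hbL, hab, t2, ht2, h2s, hd2⟩ := hb
  rw [← hf a haL b hbL] at hab
  have dq : dist (q t1) (q t2) ≤ 2 * H + 2 := by
    have := dist_triangle4 (q t1) (f a) (f b) (q t2)
    rw [dist_comm (q t1) (f a)] at this
    linarith
  have gap := QG_tgap D (2 * H + 2) _ hD ((hq t1 ht1 t2 ht2).1.trans dq)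
  refine ⟨a, haL, ?_⟩
  have h3 : |s - t1| ≤ D * (2 * H + 2 + D) := by
    rw [abs_of_nonneg (by linarith)]
    rw [abs_of_nonpos (by linarith)] at gap
    linarith
  have h4 := (hq s hs t1 ht1).2
  have h5 := mul_le_mul_of_nonneg_left h3 (by linarith : 0 ≤ D)
  have h6 := dist_triangle (q s) (q t1) (f a)
  rw [dist_comm (q t1) (f a)] at h6
  linarith

/-- Finite-endpoint form of Corollary 2.21 of the paper: for all `δ ≥ 0` and `D ≥ 1`
there is a constant `X₀ ≥ 0`, depending only on `δ` and `D`, such that in any geodesic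
metric space satisfying the four-point `δ`-hyperbolicity inequality at every basepoint,
any point on a `D`-quasi-geodesic `q : [0,T] → E` whose endpoints have Gromov product
(with respect to a basepoint `γ`) at least `K` with a point `w` satisfies
`(w·q(s))_γ ≥ K - X₀`. -/
theorem gromov_product_along_quasigeodesic :
    ∀ δ D : ℝ, 0 ≤ δ → 1 ≤ D → ∃ X₀ : ℝ, 0 ≤ X₀ ∧
      ∀ (E : Type) (_ : MetricSpace E),
        -- (i) any two points are joined by a geodesic
        (∀ u v : E, ∃ f : ℝ → E, f 0 = u ∧ f (dist u v) = v ∧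
          ∀ s ∈ Set.Icc (0 : ℝ) (dist u v), ∀ t ∈ Set.Icc (0 : ℝ) (dist u v),
            dist (f s) (f t) = |s - t|) →
        -- (ii) four-point hyperbolicity inequality at every basepoint
        (∀ p a b c : E,
          (dist p a + dist p c - dist a c) / 2 ≥
            min ((dist p a + dist p b - dist a b) / 2)
                ((dist p b + dist p c - dist b c) / 2) - 2 * δ) →
        ∀ (γ w : E) (K T : ℝ), 0 ≤ T →
          ∀ q : ℝ → E,
            -- q is a D-quasi-geodesic on [0,T]
            (∀ s ∈ Set.Icc (0 : ℝ) T, ∀ t ∈ Set.Icc (0 : ℝ) T,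
              D⁻¹ * |s - t| - D ≤ dist (q s) (q t) ∧
                dist (q s) (q t) ≤ D * |s - t| + D) →
            (dist γ w + dist γ (q 0) - dist w (q 0)) / 2 ≥ K →
            (dist γ w + dist γ (q T) - dist w (q T)) / 2 ≥ K →
            ∀ s ∈ Set.Icc (0 : ℝ) T,
              (dist γ w + dist γ (q s) - dist w (q s)) / 2 ≥ K - X₀ := by
  intro δ D hδ hD
  obtain ⟨η, hη⟩ : ∃ η, η = 2 * δ + 1 := ⟨_, rfl⟩
  have hη0 : 0 < η := by linarith
  obtain ⟨H, hH0, hH⟩ := QG_const D η (1 + D + 2 * η) hη0 (by linarith) hD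
  obtain ⟨R, hR⟩ : ∃ R, R = D * (D * (2 * (H + 1) + 2 + D)) + D + (H + 1) := ⟨_, rfl⟩
  have hR0 : 0 ≤ R := by rw [hR]; positivity
  refine ⟨R + η, by linarith, ?_⟩
  intro E _ geo hyp' γ w K T hT q hq h0 hT' s hs
  have hyp : ∀ p a b c : E, min (QGgp p a b) (QGgp p b c) - η ≤ QGgp p a c := by
    intro p a b c
    have := hyp' p a b c
    simp only [QGgp]
    linarith
  obtain ⟨f, f0, fL, hf⟩ := geo (q 0) (q T)
  have near := QG_morse1 η D H hη0.le hD hH hyp T hT q hq _ dist_nonneg f f0 fL hf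
  obtain ⟨u, hu, hd⟩ := QG_morse2 D (H + 1) hD (by linarith) T hT q hq _ dist_nonneg f f0 fL hf
    near s hs
  rw [← hR] at hd
  have a1 := hf 0 ⟨le_rfl, dist_nonneg⟩ u hu
  have a2 := hf u hu _ ⟨dist_nonneg, le_rfl⟩
  rw [f0, abs_of_nonpos (by linarith [hu.1])] at a1
  rw [fL, abs_of_nonpos (by linarith [hu.2])] at a2
  have b1 := dist_triangle (q s) (f u) (q 0)
  have b2 := dist_triangle (q s) (f u) (q T)
  rw [dist_comm (f u) (q 0)] at b1
  have c1 := dist_triangle γ (q s) (q 0)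
  have c2 := dist_triangle γ (q s) (q T)
  have key := hyp (q s) (q 0) w (q T)
  simp only [QGgp] at key
  rw [dist_comm (q 0) w, dist_comm (q s) w] at key
  rcases min_choice ((dist (q s) (q 0) + dist w (q s) - dist w (q 0)) / 2)
    ((dist w (q s) + dist (q s) (q T) - dist w (q T)) / 2) with h | h <;> rw [h] at key <;> linarith
end

section
/- Let α ∈ ℝ be irrational and B > 0. Let x₁, x₂ ∈ ℝ/ℤ be such that there exists N ∈ ℕ with k·dist(x₁ − kα, x₂) ≥ B for all integers k ≥ N, and x₁ − kα ≠ x₂ in ℝ/ℤ for all integers k ≠ 0 (i.e. the pair (x₁, x₂) is B-badly approximable for the rotation z ↦ z − α, which is the first-return map of the vertical flow on T_α to the horizontal circle {[(x,0)]}). Let p = [(x̃₁, 0)] and q = [(x̃₂, 0)] in T_α, where x̃ᵢ ∈ ℝ are lifts of xᵢ. Then for every B' with 0 < B' < B: there exists N' > 0 such that t·dist(F^t p, q) ≥ B' for all t ≥ N', and F^t p ≠ q for all t ≠ 0. -/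
/-- The lattice `Λ_α ⊆ ℝ²` generated by `(1,0)` and `(α,1)`. -/
def torusLattice (α : ℝ) : AddSubgroup (ℝ × ℝ) :=
  AddSubgroup.closure {((1 : ℝ), (0 : ℝ)), (α, (1 : ℝ))}

/-- The flat torus `T_α = ℝ²/Λ_α`. -/
abbrev FlatTorus (α : ℝ) := (ℝ × ℝ) ⧸ torusLattice α

/-- The Euclidean norm on `ℝ²`. -/
noncomputable def eucNorm (v : ℝ × ℝ) : ℝ := Real.sqrt (v.1 ^ 2 + v.2 ^ 2)

/-- The quotient metric on `T_α`: `dist([u],[v]) = inf {‖u - v - λ‖ : λ ∈ Λ_α}`. -/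
noncomputable def torusDist (α : ℝ) (x y : FlatTorus α) : ℝ :=
  sInf (eucNorm '' {w : ℝ × ℝ | (QuotientAddGroup.mk w : FlatTorus α) = x - y})

/-- The vertical straight-line flow on `T_α`: `F^t [v] = [v + (0,t)]`. -/
def vertFlow (α : ℝ) (t : ℝ) (x : FlatTorus α) : FlatTorus α :=
  x + QuotientAddGroup.mk ((0 : ℝ), t)

theorem mem_torusLattice_aux (α : ℝ) (v : ℝ × ℝ) (h : v ∈ torusLattice α) :
    ∃ m k : ℤ, v.1 = m + k * α ∧ v.2 = k := by
  unfold torusLattice at h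
  rw [AddSubgroup.mem_closure_pair] at h
  obtain ⟨m, k, rfl⟩ := h
  exact ⟨m, k, by simp, by simp⟩

theorem circle_aux (α y₁ y₂ : ℝ) (m k : ℤ) :
    ((y₁ : ℝ) : AddCircle (1 : ℝ)) - k • ((α : ℝ) : AddCircle (1 : ℝ)) - ((y₂ : ℝ) : AddCircle (1 : ℝ))
      = ((y₁ - y₂ + m - k * α : ℝ) : AddCircle (1 : ℝ)) := by
  have hm : ((m : ℝ) : AddCircle (1 : ℝ)) = 0 := by
    rw [AddCircle.coe_eq_zero_iff]
    exact ⟨m, by simp⟩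
  have hk : ((k * α : ℝ) : AddCircle (1 : ℝ)) = k • ((α : ℝ) : AddCircle (1 : ℝ)) := by
    rw [← AddCircle.coe_zsmul, zsmul_eq_mul]
  rw [AddCircle.coe_sub, AddCircle.coe_add, AddCircle.coe_sub, hm, hk]
  abel

/-- Sublemma in the proof of Proposition 3.12 of the paper, specialized to `T_α` with
the horizontal circle as transversal: if the pair `(x₁, x₂)` on the circle `ℝ/ℤ` is
`B`-badly approximable for the rotation `z ↦ z - α` (the first-return map of the
vertical flow), then the corresponding points `p = [(x̃₁, 0)]`, `q = [(x̃₂, 0)]` of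
`T_α` are `B'`-badly approximable for the vertical flow, for every `0 < B' < B`. -/
theorem badly_approximable_from_transversal (α : ℝ) (hα : Irrational α)
    (B : ℝ) (hB : 0 < B) (x₁ x₂ : AddCircle (1 : ℝ))
    (happrox : ∃ N : ℕ, ∀ k : ℤ, (N : ℤ) ≤ k →
      B ≤ (k : ℝ) * dist (x₁ - k • ((α : ℝ) : AddCircle (1 : ℝ))) x₂)
    (hne : ∀ k : ℤ, k ≠ 0 → x₁ - k • ((α : ℝ) : AddCircle (1 : ℝ)) ≠ x₂)
    (y₁ y₂ : ℝ)
    (hy₁ : ((y₁ : ℝ) : AddCircle (1 : ℝ)) = x₁)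
    (hy₂ : ((y₂ : ℝ) : AddCircle (1 : ℝ)) = x₂)
    (p q : FlatTorus α)
    (hp : p = QuotientAddGroup.mk (y₁, (0 : ℝ)))
    (hq : q = QuotientAddGroup.mk (y₂, (0 : ℝ)))
    (B' : ℝ) (hB'0 : 0 < B') (hB'B : B' < B) :
    (∃ N' : ℝ, 0 < N' ∧
      ∀ t : ℝ, N' ≤ t → B' ≤ t * torusDist α (vertFlow α t p) q) ∧
    (∀ t : ℝ, t ≠ 0 → vertFlow α t p ≠ q) := by
  subst hy₁ hy₂ hp hq
  have key : ∀ t : ℝ, ∀ w : ℝ × ℝ, (QuotientAddGroup.mk w : FlatTorus α) =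
      vertFlow α t (QuotientAddGroup.mk (y₁, (0 : ℝ))) - QuotientAddGroup.mk (y₂, (0 : ℝ)) →
      ∃ m k : ℤ, w.1 = y₁ - y₂ + m - k * α ∧ w.2 = t - k := by
    intro t w hw
    have h2 : (QuotientAddGroup.mk w : FlatTorus α) =
        QuotientAddGroup.mk ((y₁, (0 : ℝ)) + ((0 : ℝ), t) - (y₂, (0 : ℝ))) := hw
    rw [QuotientAddGroup.eq] at h2
    obtain ⟨m, k, h1, h2⟩ := mem_torusLattice_aux α _ h2
    simp at h1 h2
    refine ⟨-m, k, ?_, ?_⟩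
    · push_cast; linarith
    · linarith
  constructor
  · obtain ⟨N, hN⟩ := happrox
    have hd : 0 < B - B' := by linarith
    have hq : 0 < B' / (B - B') := by positivity
    refine ⟨N + 2 + B' + B' / (B - B'), by positivity, ?_⟩
    intro t ht
    have hN0 : (0 : ℝ) ≤ N := by positivity
    have ht0 : 0 < t := by linarith
    rw [← div_le_iff₀' ht0]
    apply le_csInf
    · refine Set.Nonempty.image _ ?_
      exact ⟨(y₁, (0 : ℝ)) + ((0 : ℝ), t) - (y₂, (0 : ℝ)), rfl⟩
    · rintro _ ⟨w, hw, rfl⟩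
      obtain ⟨m, k, h1, h2⟩ := key t w hw
      have e1 : |w.1| ≤ eucNorm w := Real.abs_le_sqrt (by nlinarith [sq_nonneg w.2])
      have e2 : |w.2| ≤ eucNorm w := Real.abs_le_sqrt (by nlinarith [sq_nonneg w.1])
      rw [div_le_iff₀' ht0]
      rcases le_or_gt 1 |w.2| with h | h
      · nlinarith
      · rw [h2, abs_lt] at h
        have hk : (N : ℝ) ≤ k := by linarith [h.1, h.2]
        have hB2 := hN k (by exact_mod_cast hk)
        have hk0 : (0 : ℝ) < k := by linarith [h.1, h.2]
        rw [dist_eq_norm, circle_aux α y₁ y₂ m k, ← h1] at hB2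
        have e3 : ‖((w.1 : ℝ) : AddCircle (1 : ℝ))‖ ≤ |w.1| :=
          QuotientAddGroup.norm_mk_le_norm
        have e4 : B ≤ k * eucNorm w :=
          hB2.trans (mul_le_mul_of_nonneg_left (e3.trans e1) hk0.le)
        have e0 : 0 ≤ eucNorm w := Real.sqrt_nonneg _
        have e5 : B ≤ (t + 1) * eucNorm w :=
          e4.trans (mul_le_mul_of_nonneg_right (by linarith [h.1]) e0)
        have e6 : B' ≤ t * (B - B') := by
          rw [← div_le_iff₀ hd]; linarith
        have e7 : B' * (t + 1) ≤ (t * eucNorm w) * (t + 1) := by nlinarith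
        exact le_of_mul_le_mul_right e7 (by linarith)
  · intro t ht heq
    obtain ⟨m, k, h1, h2⟩ := key t 0 (by rw [heq, sub_self]; rfl)
    simp at h1 h2
    have hk : k ≠ 0 := by
      rintro rfl
      apply ht
      simp at h2
      linarith
    apply hne k hk
    rw [← sub_eq_zero, circle_aux α y₁ y₂ m k, ← h1]
    simp
end

section
/- Let α ∈ ℝ and B > 0, and let q, q' ∈ T_α be points such that F^t q ≠ q' for all t ∈ ℝ, and such that there exists N > 0 with t·dist(F^t q, q') ≥ B for all t ≥ N. Then for all s, s' ∈ ℝ and every B' with 0 < B' < B, the translated points p = F^s q and p' = F^{s'} q' satisfy: F^t p ≠ p' for all t ∈ ℝ, and there exists N' > 0 such that t·dist(F^t p, p') ≥ B' for all t ≥ N'. -/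
/-- Diophantine core of Proposition 3.14 of the paper (sliding points): if `(q, q')`
is a `B`-badly approximable pair for the vertical flow on `T_α` with `q'` never on
the flow orbit of `q`, then for all `s, s' ∈ ℝ` and every `0 < B' < B` the translated
points `F^s q` and `F^{s'} q'` form a `B'`-badly approximable pair. -/
theorem sliding_points_badly_approximable (α B : ℝ) (hB : 0 < B)
    (q q' : FlatTorus α)
    (hne : ∀ t : ℝ, vertFlow α t q ≠ q')
    (happrox : ∃ N : ℝ, 0 < N ∧
      ∀ t : ℝ, N ≤ t → B ≤ t * torusDist α (vertFlow α t q) q')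
    (s s' B' : ℝ) (hB'0 : 0 < B') (hB'B : B' < B) :
    (∀ t : ℝ, vertFlow α t (vertFlow α s q) ≠ vertFlow α s' q') ∧
    (∃ N' : ℝ, 0 < N' ∧
      ∀ t : ℝ, N' ≤ t →
        B' ≤ t * torusDist α (vertFlow α t (vertFlow α s q)) (vertFlow α s' q')) := by
  have hmk : ∀ a b : ℝ, (QuotientAddGroup.mk ((0 : ℝ), a + b) : FlatTorus α)
      = QuotientAddGroup.mk ((0 : ℝ), a) + QuotientAddGroup.mk ((0 : ℝ), b) := by
    intro a b
    rw [← QuotientAddGroup.mk_add]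
    simp
  have hmkd : ∀ t : ℝ, (QuotientAddGroup.mk ((0 : ℝ), t + (s - s')) : FlatTorus α)
      + QuotientAddGroup.mk ((0 : ℝ), s')
      = QuotientAddGroup.mk ((0 : ℝ), s) + QuotientAddGroup.mk ((0 : ℝ), t) := by
    intro t
    rw [← hmk, ← hmk]
    congr 2
    ring
  have key : ∀ t : ℝ, vertFlow α t (vertFlow α s q) - vertFlow α s' q'
      = vertFlow α (t + (s - s')) q - q' := by
    intro t
    unfold vertFlow
    rw [sub_eq_sub_iff_add_eq_add, add_assoc q, ← hmkd t]
    abel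
  refine ⟨fun t h => hne (t + (s - s')) ?_, ?_⟩
  · rw [← sub_eq_zero, ← key, h, sub_self]
  obtain ⟨N, hN, H⟩ := happrox
  have hd : 0 < B - B' := sub_pos.2 hB'B
  have hq : 0 ≤ B' * |s - s'| / (B - B') := by positivity
  have ha := neg_abs_le (s - s')
  have hb := le_abs_self (s - s')
  refine ⟨N + |s - s'| + B' * |s - s'| / (B - B'), by positivity, fun t ht => ?_⟩
  have hu : N ≤ t + (s - s') := by linarith
  have h1 := H _ hu
  have hdist : torusDist α (vertFlow α t (vertFlow α s q)) (vertFlow α s' q')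
      = torusDist α (vertFlow α (t + (s - s')) q) q' := by
    unfold torusDist
    rw [key]
  rw [hdist]
  generalize torusDist α (vertFlow α (t + (s - s')) q) q' = d at h1
  have h2 : B' * |s - s'| ≤ t * (B - B') := by
    rw [← div_le_iff₀ hd]
    linarith [abs_nonneg (s - s')]
  have h3 : B' * (s - s') ≤ B' * |s - s'| := mul_le_mul_of_nonneg_left hb hB'0.le
  have ht0 : 0 ≤ t := by linarith [abs_nonneg (s - s')]
  have h4 := mul_le_mul_of_nonneg_left h1 ht0
  have hu0 : 0 < t + (s - s') := by linarith
  refine le_of_mul_le_mul_left ?_ hu0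
  linarith
end

section
/- Let θ ∈ ℝ, let r ≥ 1, and let p₁, …, p_r ∈ ℝ/ℤ. Then the set of q ∈ ℝ/ℤ such that for every i ∈ {1, …, r} the pair (p_i, q) is (1/64)^{3r}-badly approximable for the rotation R_θ is dense in ℝ/ℤ. -/
/-- A pair `(x, y)` of points of the circle `ℝ/ℤ` is `B`-badly approximable for the
rotation `R_θ : z ↦ z + θ` if there is `N ∈ ℕ` such that `k · dist(x + kθ, y) ≥ B`
for all integers `k ≥ N`, and `x + kθ ≠ y` for all integers `k ≠ 0`. -/
def BadlyApproximablePair (B θ : ℝ) (x y : AddCircle (1 : ℝ)) : Prop :=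
  (∃ N : ℕ, ∀ k : ℤ, (N : ℤ) ≤ k →
    B ≤ (k : ℝ) * dist (x + k • ((θ : ℝ) : AddCircle (1 : ℝ))) y) ∧
  (∀ k : ℤ, k ≠ 0 → x + k • ((θ : ℝ) : AddCircle (1 : ℝ)) ≠ y)

lemma exists_avoid {ι : Type*} (s : Finset ι) (c ρ : ι → ℝ) (hρ : ∀ i ∈ s, 0 ≤ ρ i) (a b : ℝ)
    (h : ∑ i ∈ s, 2 * ρ i < b - a) : ∃ x ∈ Set.Icc a b, ∀ i ∈ s, ρ i < |x - c i| := by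
  by_contra hcon
  push Not at hcon
  have hsub : Set.Icc a b ⊆ ⋃ i ∈ s, Metric.closedBall (c i) (ρ i) := by
    intro x hx
    obtain ⟨i, hi, hle⟩ := hcon x hx
    simp only [Set.mem_iUnion]
    exact ⟨i, hi, by simpa [Real.dist_eq] using hle⟩
  have h1 := (MeasureTheory.measure_mono (μ := MeasureTheory.volume) hsub).trans
    (MeasureTheory.measure_biUnion_finset_le s _)
  simp only [Real.volume_Icc, Real.volume_closedBall] at h1
  rw [← ENNReal.ofReal_sum_of_nonneg (fun i hi => by linarith [hρ i hi])] at h1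
  have h0 : 0 ≤ ∑ i ∈ s, 2 * ρ i := Finset.sum_nonneg (fun i hi => by linarith [hρ i hi])
  rw [ENNReal.ofReal_le_ofReal_iff h0] at h1
  linarith

lemma sep_cells (E : Set ℝ) (s : ℝ) (hs : 0 < s)
    (hE : ∀ x ∈ E, ∀ y ∈ E, |x - y| < s → x = y) (a : ℝ) (n : ℕ) :
    ∃ c : Fin n → ℝ, ∀ x ∈ E, a ≤ x → x < a + n * s → ∃ j, x = c j := by
  classical
  refine ⟨fun j => if h : ∃ x ∈ E, a + j * s ≤ x ∧ x < a + (j + 1) * s then h.choose else 0, ?_⟩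
  intro x hx hax hxn
  have h0 : 0 ≤ (x - a) / s := div_nonneg (by linarith) hs.le
  have h1 := Nat.floor_le h0
  have h2 := Nat.lt_floor_add_one ((x - a) / s)
  rw [le_div_iff₀ hs] at h1
  rw [div_lt_iff₀ hs] at h2
  have hlt : ⌊(x - a) / s⌋₊ < n := by
    rw [Nat.floor_lt h0, div_lt_iff₀ hs]; linarith
  have hex : ∃ y ∈ E, a + ((⟨_, hlt⟩ : Fin n) : ℕ) * s ≤ y ∧
      y < a + (((⟨_, hlt⟩ : Fin n) : ℕ) + 1) * s :=
    ⟨x, hx, by simp only; linarith, by simp only; linarith⟩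
  refine ⟨⟨_, hlt⟩, ?_⟩
  simp only
  rw [dif_pos hex]
  obtain ⟨g1, g2, g3⟩ := hex.choose_spec
  simp only at g2 g3
  apply hE x hx _ g1
  rw [abs_lt]; constructor <;> nlinarith

noncomputable def nrm (θ : ℝ) (k : ℕ) : ℝ := |k * θ - round (k * θ)|

def IsRec (θ : ℝ) (q : ℕ) : Prop := 0 < q ∧ ∀ k, 0 < k → k < q → nrm θ q < nrm θ k

lemma IsRec.sep {θ : ℝ} {q : ℕ} (h : IsRec θ q) (k : ℕ) (hk : 0 < k) (hkq : k < q) (m : ℤ) :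
    1 / (2 * q : ℝ) ≤ |k * θ - m| := by
  have hq : (0:ℝ) < q := by exact_mod_cast h.1
  have hk' : (0:ℝ) < k := by exact_mod_cast hk
  have hkq' : (k:ℝ) < q := by exact_mod_cast hkq
  refine le_trans ?_ (round_le (k * θ : ℝ) m)
  have h2 := h.2 k hk hkq
  unfold nrm at h2
  set P := round (k * θ : ℝ)
  set P' := round (q * θ : ℝ)
  set u := (k * θ - P : ℝ) with hu
  set v := (q * θ - P' : ℝ) with hv
  have hdet : q * u - k * v = ((k * P' - q * P : ℤ) : ℝ) := by
    push_cast; rw [hu, hv]; ring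
  by_cases hz : (k * P' - q * P : ℤ) = 0
  · exfalso
    rw [hz] at hdet
    have : q * |u| = k * |v| := by
      have h5 : (q:ℝ) * u = k * v := by push_cast at hdet; linarith
      have h6 := congrArg abs h5
      rwa [abs_mul, abs_mul, abs_of_pos hq, abs_of_pos hk'] at h6
    nlinarith [abs_nonneg v, abs_nonneg u]
  · have h1 : (1:ℝ) ≤ |((k * P' - q * P : ℤ) : ℝ)| := by
      exact_mod_cast Int.one_le_abs hz
    rw [← hdet] at h1
    have h3 : |q * u - k * v| ≤ q * |u| + k * |v| := by
      refine (abs_sub _ _).trans ?_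
      rw [abs_mul, abs_mul, abs_of_pos hq, abs_of_pos hk']
    rw [div_le_iff₀ (by positivity)]
    nlinarith [abs_nonneg v, abs_nonneg u]

lemma IsRec.sep_int {θ : ℝ} {q : ℕ} (h : IsRec θ q) (k : ℤ) (hk : k ≠ 0) (hkq : |k| < q) (m : ℤ) :
    1 / (2 * q : ℝ) ≤ |k * θ - m| := by
  obtain ⟨n, rfl | rfl⟩ := k.eq_nat_or_neg
  · have := h.sep n (by omega) (by simpa using hkq) m
    simpa using this
  · have := h.sep n (by omega) (by simpa using hkq) (-m)
    rw [← abs_neg]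
    convert this using 2
    push_cast; ring

lemma exists_next {θ : ℝ} (hθ : Irrational θ) {S : ℕ} (hS : IsRec θ S) (M : ℕ) (hM : S ≤ M) :
    ∃ q T, IsRec θ q ∧ IsRec θ T ∧ S ≤ q ∧ q ≤ M ∧ M < T ∧ nrm θ q ≤ 1 / T := by
  classical
  have hS0 := hS.1
  have hex : ∃ q, (0 < q ∧ q ≤ M) ∧ ∀ k, 0 < k → k ≤ M → nrm θ q ≤ nrm θ k := by
    obtain ⟨q, hq, hq'⟩ := Finset.exists_min_image (Finset.Icc 1 M) (nrm θ)
      ⟨1, Finset.mem_Icc.2 ⟨le_rfl, by omega⟩⟩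
    rw [Finset.mem_Icc] at hq
    exact ⟨q, ⟨by omega, hq.2⟩, fun k h1 h2 => hq' k (Finset.mem_Icc.2 ⟨h1, h2⟩)⟩
  let q := Nat.find hex
  obtain ⟨⟨hq0, hqM⟩, hqmin⟩ : (0 < q ∧ q ≤ M) ∧ ∀ k, 0 < k → k ≤ M → nrm θ q ≤ nrm θ k :=
    Nat.find_spec hex
  have hqrec : IsRec θ q := by
    refine ⟨hq0, fun k hk hkq => ?_⟩
    by_contra hle
    push Not at hle
    exact Nat.find_min hex hkq ⟨⟨hk, by omega⟩, fun k' h1 h2 => hle.trans (hqmin k' h1 h2)⟩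
  have hpos : 0 < nrm θ q := by
    unfold nrm
    rw [abs_pos, sub_ne_zero]
    exact (hθ.natCast_mul (by omega)).ne_int _
  have hexT : ∃ T, 0 < T ∧ nrm θ T < nrm θ q := by
    obtain ⟨n, hn⟩ := exists_nat_one_div_lt hpos
    obtain ⟨k, hk, -, hk2⟩ := Real.exists_nat_abs_mul_sub_round_le θ (n := n + 1) (by omega)
    refine ⟨k, hk, lt_of_le_of_lt hk2 (lt_of_le_of_lt ?_ hn)⟩
    apply one_div_le_one_div_of_le (by positivity)
    push_cast; linarith
  let T := Nat.find hexT
  obtain ⟨hT0, hT⟩ : 0 < T ∧ nrm θ T < nrm θ q := Nat.find_spec hexT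
  have hTmin : ∀ k, 0 < k → k < T → nrm θ q ≤ nrm θ k := by
    intro k hk hkT
    by_contra hlt
    push Not at hlt
    exact Nat.find_min hexT hkT ⟨hk, hlt⟩
  have hMT : M < T := by
    by_contra hle
    push Not at hle
    exact absurd (hqmin T hT0 hle) (not_le.2 hT)
  refine ⟨q, T, hqrec, ⟨hT0, fun k hk hkT => hT.trans_le (hTmin k hk hkT)⟩, ?_, hqM, hMT, ?_⟩
  · by_contra hlt
    push Not at hlt
    exact absurd (hqmin S hS0 hM) (not_le.2 (hS.2 q hq0 hlt))
  · obtain ⟨k, hk, hk1, hk2⟩ := Real.exists_nat_abs_mul_sub_round_le θ (n := T - 1) (by omega)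
    refine (hTmin k hk (by omega)).trans (hk2.trans ?_)
    rw [Nat.cast_sub (by omega)]
    simp

/-- single progression -/
lemma progression {θ : ℝ} {q T : ℕ} (hq : IsRec θ q) (hT : 0 < T) (hqT : nrm θ q ≤ 1 / T)
    {μ w : ℝ} (hμ : 0 ≤ μ) (hw : w + μ / q < 1 / (2 * q)) (k : ℕ) (hk : (k:ℝ) ≤ μ * T) (m : ℤ)
    (h : |k * θ + m| ≤ w) : |k * θ + m| ≤ μ / q := by
  have hq0 : (0:ℝ) < q := by exact_mod_cast hq.1
  have hq1 : (1:ℝ) ≤ q := by exact_mod_cast hq.1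
  have hT0 : (0:ℝ) < T := by exact_mod_cast hT
  set j := k / q
  set s := k % q
  have hks : (k:ℝ) = q * j + s := by exact_mod_cast (Nat.div_add_mod k q).symm
  set P := round (q * θ : ℝ)
  set e := (q * θ - P : ℝ) with he
  have he1 : |e| ≤ 1 / T := hqT
  have hj : (j : ℝ) * |e| ≤ μ / q := by
    have : (j:ℝ) * q ≤ μ * T := by
      have : (0:ℝ) ≤ s := by positivity
      linarith
    calc (j:ℝ) * |e| ≤ j * (1 / T) := by gcongr
      _ ≤ μ / q := by
        rw [mul_one_div, div_le_div_iff₀ hT0 hq0]; exact this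
  have hje : |j * e| ≤ μ / q := by rwa [abs_mul, abs_of_nonneg (by positivity : (0:ℝ) ≤ j)]
  have hs : s = 0 := by
    by_contra hs
    have h1 := hq.sep s (by omega) (Nat.mod_lt _ hq.1) (-(m + j * P))
    have h2 : (s * θ - ((-(m + j * P) : ℤ) : ℝ)) = (k * θ + m) - j * e := by
      push_cast; rw [he, hks]; ring
    rw [h2] at h1
    have := abs_sub (k * θ + m : ℝ) (j * e)
    linarith
  have hk2 : (k * θ + m : ℝ) = j * e + ((m + j * P : ℤ) : ℝ) := by
    push_cast; rw [hks, hs, he]; push_cast; ring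
  have hz : m + j * P = 0 := by
    by_contra hz
    have h1 : (1:ℝ) ≤ |((m + j * P : ℤ) : ℝ)| := by exact_mod_cast Int.one_le_abs hz
    have h2 : ((m + j * P : ℤ) : ℝ) = (k * θ + m) - j * e := by rw [hk2]; ring
    rw [h2] at h1
    have := abs_sub (k * θ + m : ℝ) (j * e)
    have h3 : 1 / (2 * q : ℝ) ≤ 1 / 2 := by
      apply one_div_le_one_div_of_le <;> linarith
    linarith
  rw [hk2, hz]; simpa using hje

lemma arith {r c μ S T : ℝ} (hr : 1 ≤ r) (hc : c = 1 / (112 * r)) (hμ0 : 0 < μ)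
    (hμ : μ ≤ 1 / (512 * r ^ 2)) (hS : 0 < S) (hT : 28 * r * S ≤ T) {n : ℝ}
    (hn : n ≤ 2 * c * T / S + 4 * μ + 1) :
    2 * (c / (2 * T)) + r * (2 * ((μ + μ ^ 2) / S + c / (2 * T))) +
      r * (n * (2 * (μ / T + c / (2 * T)))) < c / S - c / T := by
  have hr0 : 0 < r := by linarith
  have hT0 : 0 < T := lt_of_lt_of_le (by positivity) hT
  have hc0 : 0 < c := by rw [hc]; positivity
  have hrc : r * c = 1 / 112 := by rw [hc]; field_simp
  have hrμ : r * μ ≤ c * (112 / 512) := by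
    rw [hc]
    calc r * μ ≤ r * (1 / (512 * r ^ 2)) := by gcongr
      _ = 1 / (112 * r) * (112 / 512) := by field_simp
  have hμ1 : μ ≤ 1 / 512 := hμ.trans (by
    apply one_div_le_one_div_of_le (by norm_num); nlinarith)
  have hμc : μ ≤ c * (112 / 512) := by nlinarith
  -- t = S/T
  have hST : r * (S / T) ≤ 1 / 28 := by
    rw [← mul_div_assoc, div_le_iff₀ hT0]; linarith
  have ht0 : 0 < S / T := by positivity
  have ht1 : S / T ≤ 1 / 28 := by nlinarith
  have e1 : 2 * (c / (2 * T)) + r * (2 * ((μ + μ ^ 2) / S + c / (2 * T))) +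
      r * (n * (2 * (μ / T + c / (2 * T)))) =
      (c * (S / T) + 2 * (r * μ) * (1 + μ) + c * (r * (S / T)) +
        r * (n * (S / T)) * (2 * μ + c)) / S := by
    field_simp
    try ring
  have e2 : c / S - c / T = (c - c * (S / T)) / S := by field_simp
  rw [e1, e2]
  apply div_lt_div_of_pos_right _ hS
  have hn1 : r * (n * (S / T)) ≤ 2 / 112 + (1 / 28) * (4 * μ + 1) := by
    calc r * (n * (S / T)) ≤ r * ((2 * c * T / S + 4 * μ + 1) * (S / T)) := by gcongr
      _ = 2 * (r * c) + (r * (S / T)) * (4 * μ + 1) := by field_simp; try ring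
      _ ≤ _ := by rw [hrc]; nlinarith
  have hn2 : r * (n * (S / T)) ≤ 6 / 100 := by linarith
  have a1 : c * (S / T) ≤ c * (1 / 28) := by gcongr
  have a2 : c * (r * (S / T)) ≤ c * (1 / 28) := by gcongr
  have a3 : 2 * (r * μ) * (1 + μ) ≤ 2 * (c * (112 / 512)) * (1 + 1 / 512) := by gcongr
  have a4 : r * (n * (S / T)) * (2 * μ + c) ≤ 6 / 100 * (2 * (c * (112 / 512)) + c) := by gcongr
  linarith

set_option maxHeartbeats 2000000 in
lemma step {θ : ℝ} (hθ : Irrational θ) {r : ℕ} (hr : 1 ≤ r) (p : Fin r → ℝ) {c μ : ℝ}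
    (hc : c = 1 / (112 * r)) (hμ0 : 0 < μ) (hμ : μ ≤ 1 / (512 * (r:ℝ) ^ 2))
    (z : ℝ) (S : ℕ) (x : ℝ) (hS : IsRec θ S) :
    ∃ (T : ℕ) (x' : ℝ), IsRec θ T ∧ S < T ∧ |x' - x| ≤ c / (2 * S) - c / (2 * T) ∧
      ∀ y, |y - x'| ≤ c / (2 * T) → y ≠ z ∧
        ∀ (i : Fin r) (k : ℕ) (m : ℤ), S ≤ k → k < T → μ ^ 2 / k ≤ |p i + k * θ + m - y| := by
  classical
  have hS0 : (0:ℝ) < S := by exact_mod_cast hS.1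
  have hr1 : (1:ℝ) ≤ r := by exact_mod_cast hr
  have hr0 : (0:ℝ) < r := by linarith
  have hc0 : 0 < c := by rw [hc]; positivity
  have hSM : S ≤ 28 * r * S := by nlinarith [hS.1]
  obtain ⟨q, T, hq, hT, hSq, hqM, hMT, hnq⟩ := exists_next hθ hS (28 * r * S) hSM
  have hT0 : (0:ℝ) < T := by exact_mod_cast hT.1
  have hq0 : (0:ℝ) < q := by exact_mod_cast hq.1
  have hSq' : (S:ℝ) ≤ q := by exact_mod_cast hSq
  have hqM' : (q:ℝ) ≤ 28 * r * S := by exact_mod_cast hqM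
  have hMT' : 28 * r * (S:ℝ) ≤ T := by exact_mod_cast hMT.le
  have hμ1 : r * μ ≤ 1 / 512 := by
    calc r * μ ≤ r * (1 / (512 * (r:ℝ) ^ 2)) := by gcongr
      _ = 1 / (512 * r) := by field_simp
      _ ≤ 1 / 512 := by apply one_div_le_one_div_of_le <;> linarith
  have hμ2 : μ ≤ 1 / 512 := by nlinarith
  set ρ := c / (2 * S) with hρ
  set ρ' := c / (2 * T) with hρ'
  have hρ0' : 0 < ρ' := by positivity
  -- long pieces
  have hlong : ∀ i : Fin r, ∃ C : ℝ, ∀ (k : ℕ) (m : ℤ), S ≤ k → (k:ℝ) ≤ μ * T →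
      |p i + k * θ + m - x| ≤ ρ + μ ^ 2 / S → |p i + k * θ + m - C| ≤ μ / S := by
    intro i
    by_cases hex : ∃ (k : ℕ) (m : ℤ), S ≤ k ∧ (k:ℝ) ≤ μ * T ∧
      |p i + k * θ + m - x| ≤ ρ + μ ^ 2 / S
    swap
    · refine ⟨0, fun k m h1 h2 h3 => absurd ⟨k, m, h1, h2, h3⟩ hex⟩
    obtain ⟨k0, m0, h01, h02, h03⟩ := hex
    refine ⟨p i + k0 * θ + m0, fun k m h1 h2 h3 => ?_⟩
    have hw : (2 * (ρ + μ ^ 2 / S)) + μ / q < 1 / (2 * q) := by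
      have e : 2 * (ρ + μ ^ 2 / S) = (c + 2 * μ ^ 2) / S := by rw [hρ]; field_simp
      have e2 : (c + 2 * μ ^ 2) / S ≤ (28 * r * (c + 2 * μ ^ 2)) / q := by
        rw [div_le_div_iff₀ hS0 hq0]
        have : 0 < c + 2 * μ ^ 2 := by positivity
        nlinarith
      have e3 : 28 * r * (c + 2 * μ ^ 2) + μ < 1 / 2 := by
        have : r * c = 1 / 112 := by rw [hc]; field_simp
        nlinarith
      have e4 : 1 / (2 * q : ℝ) = (1 / 2) / q := by field_simp
      rw [e, e4]
      calc _ ≤ (28 * r * (c + 2 * μ ^ 2)) / q + μ / q := by linarith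
        _ = (28 * r * (c + 2 * μ ^ 2) + μ) / q := by ring
        _ < _ := by gcongr
    have hfin : μ / q ≤ μ / S := by gcongr
    have hd : |(p i + k * θ + m) - (p i + k0 * θ + m0)| ≤ 2 * (ρ + μ ^ 2 / S) := by
      have g1 := abs_le.1 h3
      have g2 := abs_le.1 h03
      rw [abs_le]
      constructor <;> linarith [g1.1, g1.2, g2.1, g2.2]
    refine le_trans ?_ hfin
    rcases le_total k0 k with hkk | hkk
    · have e : (p i + k * θ + m) - (p i + k0 * θ + m0) =
          ((k - k0 : ℕ) : ℝ) * θ + ((m - m0 : ℤ) : ℝ) := by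
        rw [Nat.cast_sub hkk]; push_cast; ring
      rw [e] at hd ⊢
      refine progression hq hT.1 hnq hμ0.le hw _ ?_ _ hd
      refine le_trans ?_ h2
      exact_mod_cast Nat.sub_le _ _
    · have e : (p i + k * θ + m) - (p i + k0 * θ + m0) =
          -(((k0 - k : ℕ) : ℝ) * θ + ((m0 - m : ℤ) : ℝ)) := by
        rw [Nat.cast_sub hkk]; push_cast; ring
      rw [e, abs_neg] at hd ⊢
      refine progression hq hT.1 hnq hμ0.le hw _ ?_ _ hd
      refine le_trans ?_ h02
      exact_mod_cast Nat.sub_le _ _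
  choose C hC using hlong
  -- short pieces
  set n := ⌊2 * T * (2 * ρ + 2 * μ / T)⌋₊ + 1 with hn
  have hshort : ∀ i : Fin r, ∃ d : Fin n → ℝ, ∀ (k : ℕ) (m : ℤ), k < T →
      |p i + k * θ + m - x| ≤ ρ + μ / T → ∃ j, p i + k * θ + m = d j := by
    intro i
    obtain ⟨d, hd⟩ := sep_cells {y | ∃ (k : ℕ) (m : ℤ), k < T ∧ y = p i + k * θ + m}
      (1 / (2 * T)) (by positivity) (by
        rintro _ ⟨k, m, hk, rfl⟩ _ ⟨k', m', hk', rfl⟩ hlt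
        by_cases hkk : k = k'
        · subst hkk
          have hmm : m = m' := by
            by_contra hmm
            have h1 : (1:ℝ) ≤ |((m - m' : ℤ) : ℝ)| := by
              exact_mod_cast Int.one_le_abs (sub_ne_zero.2 hmm)
            have e : (p i + k * θ + m) - (p i + k * θ + m') = ((m - m' : ℤ) : ℝ) := by
              push_cast; ring
            rw [e] at hlt
            have hT1 : (1:ℝ) ≤ T := by exact_mod_cast hT.1
            have : 1 / (2 * T : ℝ) ≤ 1 := by
              rw [div_le_one (by positivity)]; linarith
            linarith
          rw [hmm]
        · exfalso
          have h1 := hT.sep_int ((k:ℤ) - k') (by omega) (by rw [abs_lt]; omega) (m' - m)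
          have e : (p i + k * θ + m) - (p i + k' * θ + m') =
            (((k:ℤ) - k' : ℤ) : ℝ) * θ - ((m' - m : ℤ) : ℝ) := by push_cast; ring
          rw [e] at hlt
          linarith) (x - ρ - μ / T) n
    refine ⟨d, fun k m hk h => hd _ ⟨k, m, hk, rfl⟩ ?_ ?_⟩
    · rw [abs_le] at h; linarith
    · rw [abs_le] at h
      have h1 := Nat.lt_floor_add_one (2 * T * (2 * ρ + 2 * μ / T))
      have h2 : 2 * ρ + 2 * μ / T < n * (1 / (2 * T)) := by
        rw [mul_one_div, lt_div_iff₀ (by positivity), hn]; push_cast; linarith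
      have e : 2 * μ / T = 2 * (μ / T) := by ring
      linarith
  choose d hd using hshort
  have hnle : (n:ℝ) ≤ 2 * c * T / S + 4 * μ + 1 := by
    have h1 := Nat.floor_le (a := 2 * T * (2 * ρ + 2 * μ / T)) (by positivity)
    have e : 2 * T * (2 * ρ + 2 * μ / T) = 2 * c * T / S + 4 * μ := by
      rw [hρ]; field_simp; try ring
    rw [hn]; push_cast; linarith
  have har := arith hr1 hc hμ0 hμ hS0 hMT' hnle
  obtain ⟨x', hx', hav⟩ := exists_avoid
    (Finset.univ : Finset (Unit ⊕ Fin r ⊕ (Fin r × Fin n)))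
    (Sum.elim (fun _ => z) (Sum.elim C (fun ij => d ij.1 ij.2)))
    (Sum.elim (fun _ => ρ') (Sum.elim (fun _ => (μ + μ ^ 2) / S + ρ') (fun _ => μ / T + ρ')))
    (by rintro (_ | _ | _) _ <;> simp <;> positivity) (x - (ρ - ρ')) (x + (ρ - ρ'))
    (by
      simp only [Fintype.sum_sum_type, Sum.elim_inl, Sum.elim_inr, Finset.sum_const,
        Finset.card_univ, Fintype.card_prod, Fintype.card_fin, Fintype.card_unit, nsmul_eq_mul]
      have e1 : c / S = 2 * ρ := by rw [hρ]; field_simp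
      have e2 : c / T = 2 * ρ' := by rw [hρ']; field_simp
      rw [e1, e2] at har
      push_cast
      linarith)
  refine ⟨T, x', hT, lt_of_le_of_lt hSM hMT, ?_, ?_⟩
  · rw [Set.mem_Icc] at hx'
    rw [abs_le]; constructor <;> linarith
  intro y hy
  have hyx : |y - x| ≤ ρ := by
    rw [Set.mem_Icc] at hx'
    have g := abs_le.1 hy
    rw [abs_le]; constructor <;> linarith [g.1, g.2, hx'.1, hx'.2]
  refine ⟨?_, ?_⟩
  · rintro rfl
    have := hav (Sum.inl ()) (Finset.mem_univ _)
    simp only [Sum.elim_inl] at this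
    rw [abs_sub_comm] at this
    linarith
  intro i k m hSk hkT
  by_contra hlt
  push Not at hlt
  have hSk' : (S:ℝ) ≤ k := by exact_mod_cast hSk
  have hk0 : (0:ℝ) < k := by linarith
  rcases le_or_gt (k:ℝ) (μ * T) with hk | hk
  · have h1 : μ ^ 2 / k ≤ μ ^ 2 / S := by gcongr
    have h2 := hC i k m hSk hk (by
      have g1 := abs_lt.1 hlt
      have g2 := abs_le.1 hyx
      rw [abs_le]; constructor <;> linarith [g1.1, g1.2, g2.1, g2.2])
    have h3 := hav (Sum.inr (Sum.inl i)) (Finset.mem_univ _)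
    simp only [Sum.elim_inl, Sum.elim_inr] at h3
    have h4 : |x' - C i| ≤ |p i + k * θ + m - C i| + |p i + k * θ + m - y| + |y - x'| := by
      have e : x' - C i = (p i + k * θ + m - C i) - (p i + k * θ + m - y) - (y - x') := by ring
      rw [e]
      exact (abs_sub _ _).trans (by gcongr; exact abs_sub _ _)
    have e : (μ + μ ^ 2) / S = μ / S + μ ^ 2 / S := by ring
    linarith
  · have h1 : μ ^ 2 / k ≤ μ / T := by
      rw [div_le_div_iff₀ hk0 hT0]; nlinarith
    obtain ⟨j, hj⟩ := hd i k m hkT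
      (by
      have g1 := abs_lt.1 hlt
      have g2 := abs_le.1 hyx
      rw [abs_le]; constructor <;> linarith [g1.1, g1.2, g2.1, g2.2])
    have h3 := hav (Sum.inr (Sum.inr (i, j))) (Finset.mem_univ _)
    simp only [Sum.elim_inr] at h3
    rw [← hj] at h3
    have h4 : |x' - (p i + k * θ + m)| ≤ |p i + k * θ + m - y| + |y - x'| := by
      have e : x' - (p i + k * θ + m) = -((p i + k * θ + m - y) + (y - x')) := by ring
      rw [e, abs_neg]
      exact abs_add_le _ _
    linarith

lemma real_main {θ : ℝ} (hθ : Irrational θ) {r : ℕ} (hr : 1 ≤ r) (p : Fin r → ℝ) {μ : ℝ}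
    (hμ0 : 0 < μ) (hμ : μ ≤ 1 / (512 * (r:ℝ) ^ 2)) (z : ℕ → ℝ) (x : ℝ) (ε : ℝ) (hε : 0 < ε) :
    ∃ y, |y - x| ≤ ε ∧ (∀ t, y ≠ z t) ∧ ∃ N : ℕ, 0 < N ∧ ∀ (i : Fin r) (k : ℕ) (m : ℤ), N ≤ k →
      μ ^ 2 / k ≤ |p i + k * θ + m - y| := by
  have hr1 : (1:ℝ) ≤ r := by exact_mod_cast hr
  obtain ⟨c, hc⟩ : ∃ c : ℝ, c = 1 / (112 * r) := ⟨_, rfl⟩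
  have hc0 : 0 < c := by rw [hc]; positivity
  obtain ⟨S0, hS0, hS0ε⟩ : ∃ S0, IsRec θ S0 ∧ c / (2 * S0) ≤ ε := by
    have h1 : IsRec θ 1 := ⟨one_pos, fun k h1 h2 => by omega⟩
    obtain ⟨M, hM⟩ := exists_nat_gt (c / ε)
    obtain ⟨_, T, _, hT, _, _, hMT, _⟩ := exists_next hθ h1 (M + 1) (by omega)
    refine ⟨T, hT, ?_⟩
    have : (M + 1 : ℝ) < T := by exact_mod_cast hMT
    have hM0 : (0:ℝ) ≤ M := by positivity
    rw [div_lt_iff₀ hε] at hM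
    rw [div_le_iff₀ (by linarith)]
    nlinarith
  choose fT fx h1 h2 h3 h4 using fun (t : ℕ) (σ : {σ : ℕ × ℝ // IsRec θ σ.1}) =>
    step hθ hr p hc hμ0 hμ (z t) σ.1.1 σ.1.2 σ.2
  let σ : ℕ → {σ : ℕ × ℝ // IsRec θ σ.1} := fun n => Nat.rec ⟨(S0, x), hS0⟩
    (fun t s => ⟨(fT t s, fx t s), h1 t s⟩) n
  let S : ℕ → ℕ := fun t => (σ t).1.1
  let X : ℕ → ℝ := fun t => (σ t).1.2
  have hSlt : ∀ t, S t < S (t + 1) := fun t => h2 t (σ t)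
  have hX : ∀ t, |X (t + 1) - X t| ≤ c / (2 * S t) - c / (2 * S (t + 1)) := fun t => h3 t (σ t)
  have hav : ∀ t y, |y - X (t + 1)| ≤ c / (2 * S (t + 1)) → y ≠ z t ∧
        ∀ (i : Fin r) (k : ℕ) (m : ℤ), S t ≤ k → k < S (t + 1) →
          μ ^ 2 / k ≤ |p i + k * θ + m - y| := fun t => h4 t (σ t)
  have hmono : StrictMono S := strictMono_nat_of_lt_succ hSlt
  obtain ⟨y, hy⟩ : ∃ y, ∀ t, |y - X t| ≤ c / (2 * S t) := by
    let I : ℕ → Set ℝ := fun t => Set.Icc (X t - c / (2 * S t)) (X t + c / (2 * S t))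
    have hne := IsCompact.nonempty_iInter_of_sequence_nonempty_isCompact_isClosed I
      (fun t => Set.Icc_subset_Icc (by have := abs_le.1 (hX t); linarith)
        (by have := abs_le.1 (hX t); linarith))
      (fun t => Set.nonempty_Icc.2 (by
        have : 0 ≤ c / (2 * S t) := by positivity
        linarith)) isCompact_Icc (fun t => isClosed_Icc)
    obtain ⟨y, hy⟩ := hne
    refine ⟨y, fun t => ?_⟩
    have := Set.mem_iInter.1 hy t
    rw [Set.mem_Icc] at this
    rw [abs_le]; constructor <;> linarith
  refine ⟨y, (hy 0).trans hS0ε, fun t => (hav t y (hy (t + 1))).1, S0, hS0.1, ?_⟩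
  intro i k m hk
  have hex : ∃ t, k < S t := ⟨k + 1, lt_of_lt_of_le (Nat.lt_succ_self k) (hmono.le_apply)⟩
  classical
  obtain ⟨t, ht⟩ : ∃ t, Nat.find hex = t + 1 := by
    apply Nat.exists_eq_succ_of_ne_zero
    intro h0
    have := Nat.find_spec hex
    rw [h0] at this
    exact absurd this (not_lt.2 hk)
  have hk1 := Nat.find_spec hex
  rw [ht] at hk1
  have hk2 : ¬ k < S t := Nat.find_min hex (by omega)
  exact (hav t y (hy (t + 1))).2 i k m (not_lt.1 hk2) hk1

lemma orbit_coe (a θ : ℝ) (k : ℤ) : ((a : ℝ) : AddCircle (1 : ℝ)) + k • ((θ : ℝ) : AddCircle (1 : ℝ))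
    = ((a + k * θ : ℝ) : AddCircle (1 : ℝ)) := by
  rw [AddCircle.coe_add, ← zsmul_eq_mul, AddCircle.coe_zsmul]

lemma dist_coe (a b : ℝ) : dist (a : AddCircle (1 : ℝ)) (b : AddCircle (1 : ℝ))
    = |a - b - round (a - b)| := by
  rw [dist_eq_norm, ← AddCircle.coe_sub, AddCircle.norm_eq]
  simp

lemma coe_eq_iff (a b : ℝ) : (a : AddCircle (1 : ℝ)) = (b : AddCircle (1 : ℝ)) →
    ∃ m : ℤ, b = a + m := by
  intro h
  rw [← dist_eq_zero, dist_coe, abs_eq_zero] at h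
  exact ⟨-round (a - b), by push_cast; linarith⟩

lemma rat_case {θ : ℝ} (hθ : ¬ Irrational θ) (B : ℝ) (r : ℕ)
    (p : Fin r → AddCircle (1 : ℝ)) :
    Dense {q : AddCircle (1 : ℝ) | ∀ i : Fin r, BadlyApproximablePair B θ (p i) q} := by
  choose a ha using fun i => QuotientAddGroup.mk_surjective (p i)
  have ha' : ∀ i, p i = ((a i : ℝ) : AddCircle (1 : ℝ)) := fun i => (ha i).symm
  have hfin : ∀ i, (Set.range fun k : ℤ => p i + k • ((θ : ℝ) : AddCircle (1 : ℝ))).Finite := by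
    intro i
    unfold Irrational at hθ
    push Not at hθ
    obtain ⟨w, rfl⟩ := hθ
    have hz : (w.den : ℤ) • (((w : ℝ) : ℝ) : AddCircle (1 : ℝ)) = 0 := by
      rw [← AddCircle.coe_zsmul, AddCircle.coe_eq_zero_iff]
      refine ⟨w.num, ?_⟩
      have := Rat.den_mul_eq_num w
      simp only [zsmul_eq_mul, mul_one, Int.cast_natCast]
      exact_mod_cast this.symm
    refine Set.Finite.subset ((Set.finite_Ico (0:ℤ) w.den).image
      fun k : ℤ => p i + k • (((w : ℝ) : ℝ) : AddCircle (1 : ℝ))) ?_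
    rintro _ ⟨k, rfl⟩
    have hd : (0:ℤ) < w.den := by exact_mod_cast w.den_pos
    refine ⟨k % w.den, ⟨Int.emod_nonneg _ hd.ne', Int.emod_lt_of_pos _ hd⟩, ?_⟩
    simp only
    conv_rhs => rw [← Int.emod_add_mul_ediv k w.den, add_zsmul, mul_comm, mul_zsmul, hz]
    simp
  have hcount : ({y : ℝ | ∃ i, ∃ k m : ℤ, y = a i + k * θ + m}).Countable := by
    have : {y : ℝ | ∃ i, ∃ k m : ℤ, y = a i + k * θ + m} =
        Set.range (fun t : Fin r × ℤ × ℤ => a t.1 + t.2.1 * θ + t.2.2) := by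
      ext y; simp [eq_comm]
    rw [this]; exact Set.countable_range _
  have hd := hcount.dense_compl ℝ
  have hd2 := (QuotientAddGroup.mk_surjective (s := AddSubgroup.zmultiples (1:ℝ))).denseRange.dense_image
    (AddCircle.continuous_mk' (1:ℝ)) hd
  refine hd2.mono ?_
  rintro _ ⟨y, hy, rfl⟩ i
  have hne : ∀ k : ℤ, p i + k • ((θ : ℝ) : AddCircle (1 : ℝ)) ≠ (y : AddCircle (1:ℝ)) := by
    intro k h
    rw [ha', orbit_coe] at h
    obtain ⟨m, hm⟩ := coe_eq_iff _ _ h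
    exact hy ⟨i, k, m, hm⟩
  refine ⟨?_, fun k _ => hne k⟩
  have hnm : (y : AddCircle (1:ℝ)) ∉ Set.range fun k : ℤ => p i + k • ((θ : ℝ) : AddCircle (1 : ℝ)) := by
    rintro ⟨k, hk⟩; exact hne k hk
  have hpos := ((hfin i).isClosed.notMem_iff_infDist_pos ⟨_, ⟨0, rfl⟩⟩).1 hnm
  obtain ⟨N, hN⟩ := exists_nat_gt (B / Metric.infDist (y : AddCircle (1:ℝ))
    (Set.range fun k : ℤ => p i + k • ((θ : ℝ) : AddCircle (1 : ℝ))))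
  refine ⟨N, fun k hk => ?_⟩
  have h1 := Metric.infDist_le_dist_of_mem (x := (y : AddCircle (1:ℝ)))
    (s := Set.range fun k : ℤ => p i + k • ((θ : ℝ) : AddCircle (1 : ℝ))) ⟨k, rfl⟩
  rw [dist_comm] at h1
  rw [div_lt_iff₀ hpos] at hN
  have hk' : (N:ℝ) ≤ k := by exact_mod_cast hk
  have hN0 : (0:ℝ) ≤ N := by positivity
  refine hN.le.trans ?_
  exact mul_le_mul hk' h1 hpos.le (by linarith)

/-- Density consequence of Tseng's theorem and Schmidt's intersection lemma: for any
rotation `R_θ` and points `p₁, …, p_r` of `ℝ/ℤ`, the set of `q` such that every pair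
`(p_i, q)` is `(1/64)^{3r}`-badly approximable for `R_θ` is dense in `ℝ/ℤ`. -/
theorem dense_badly_approximable_partners (θ : ℝ) (r : ℕ) (hr : 1 ≤ r)
    (p : Fin r → AddCircle (1 : ℝ)) :
    Dense {q : AddCircle (1 : ℝ) |
      ∀ i : Fin r, BadlyApproximablePair ((1 / 64 : ℝ) ^ (3 * r)) θ (p i) q} := by
  by_cases hθ : Irrational θ
  swap
  · exact rat_case hθ _ r p
  choose a ha using fun i => QuotientAddGroup.mk_surjective (p i)
  have ha' : ∀ i, p i = ((a i : ℝ) : AddCircle (1 : ℝ)) := fun i => (ha i).symm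
  have hB : (1 / 64 : ℝ) ^ (3 * r) = ((1 / 512 : ℝ) ^ r) ^ 2 := by
    rw [pow_mul, pow_right_comm (1 / 512 : ℝ) r 2]; norm_num
  have hμ : (1 / 512 : ℝ) ^ r ≤ 1 / (512 * (r:ℝ) ^ 2) := by
    rw [one_div, inv_pow, ← one_div]
    apply one_div_le_one_div_of_le (by positivity)
    have : ∀ s : ℕ, 512 * (s + 1) ^ 2 ≤ 512 ^ (s + 1) := by
      intro s
      induction s with
      | zero => norm_num
      | succ s ih => 
        rw [pow_succ 512 (s + 1)]
        generalize 512 ^ (s + 1) = u at ih ⊢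
        have h7 : 512 * (s + 1 + 1) ^ 2 ≤ 4 * (512 * (s + 1) ^ 2) := by
          ring_nf; nlinarith [Nat.zero_le s, Nat.zero_le (s ^ 2)]
        omega
    obtain ⟨s, rfl⟩ := Nat.exists_eq_add_of_le' hr
    have h5 : ((512 * (s + 1) ^ 2 : ℕ) : ℝ) ≤ ((512 ^ (s + 1) : ℕ) : ℝ) := Nat.cast_le.2 (this s)
    rw [Nat.cast_mul, Nat.cast_pow, Nat.cast_pow] at h5
    simpa only [Nat.cast_ofNat] using h5
  rw [Metric.dense_iff]
  intro q ε hε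
  obtain ⟨x, rfl⟩ := QuotientAddGroup.mk_surjective q
  have : Nonempty (Fin r × ℤ × ℤ) := ⟨⟨⟨0, hr⟩, 0, 0⟩⟩
  obtain ⟨e, he⟩ := exists_surjective_nat (Fin r × ℤ × ℤ)
  obtain ⟨y, hyx, hyz, N, hN0, hN⟩ := real_main hθ hr a (by positivity) hμ
    (fun t => a (e t).1 + (e t).2.1 * θ + (e t).2.2) x (ε / 2) (by linarith)
  refine ⟨(y : AddCircle (1:ℝ)), ?_, ?_⟩
  · rw [Metric.mem_ball]
    refine lt_of_le_of_lt ?_ (lt_of_le_of_lt hyx (by linarith))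
    change dist (y : AddCircle (1:ℝ)) (x : AddCircle (1:ℝ)) ≤ _
    rw [dist_coe]
    simpa using round_le (y - x) 0
  · intro i
    refine ⟨⟨N, fun k hk => ?_⟩, fun k _ h => ?_⟩
    · obtain ⟨k, rfl⟩ := Int.eq_ofNat_of_zero_le (by omega : 0 ≤ k)
      have hk' : N ≤ k := by exact_mod_cast hk
      have hk0 : (0:ℝ) < k := by exact_mod_cast (by omega : 0 < k)
      rw [ha', orbit_coe, dist_coe, hB]
      have := hN i k (-round (a i + ((k:ℤ):ℝ) * θ - y)) hk'
      rw [div_le_iff₀ hk0] at this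
      rw [mul_comm]
      rw [Int.cast_natCast] at this ⊢
      rw [show a i + (k:ℝ) * θ - y - (round (a i + (k:ℝ) * θ - y) : ℝ) =
        a i + (k:ℝ) * θ + ((-round (a i + (k:ℝ) * θ - y) : ℤ) : ℝ) - y by rw [Int.cast_neg]; ring]
      exact this
    · rw [ha', orbit_coe] at h
      obtain ⟨m, hm⟩ := coe_eq_iff _ _ h
      obtain ⟨t, ht⟩ := he (i, k, m)
      exact hyz t (by simp only [ht]; exact hm)
end

section
/- Let θ ∈ ℝ and k ≥ 1. Then the set of tuples (p₁, …, p_k) ∈ (ℝ/ℤ)^k such that for all i ≠ j the pair (p_i, p_j) is (1/64)^{3(k−1)}-badly approximable for the rotation R_θ is dense in (ℝ/ℤ)^k. -/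
lemma pig_aux (X : Finset ℝ) (M : ℕ) (hM : X.card < M) (S : ℝ → Set ℝ) (a L h D ρ : ℝ)
    (hρ : 0 ≤ ρ) (hD : 0 ≤ D) (hh : D + 2 * ρ < h) (hL : 2 * M * h ≤ L)
    (hS : ∀ x ∈ X, ∀ u ∈ S x, ∀ v ∈ S x, a - ρ ≤ u → u ≤ a + L + ρ → a - ρ ≤ v →
      v ≤ a + L + ρ → |u - v| ≤ D) :
    ∃ a', a ≤ a' ∧ a' + h ≤ a + L ∧ ∀ y, a' ≤ y → y ≤ a' + h → ∀ x ∈ X, ∀ u ∈ S x,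
      ρ < |y - u| := by
  by_contra hcon
  push Not at hcon
  have hpos : 0 < h := by linarith
  have key : ∀ t : ℕ, t < M → ∃ y x u, a + 2 * h * t ≤ y ∧ y ≤ a + 2 * h * t + h ∧ x ∈ X ∧
      u ∈ S x ∧ |y - u| ≤ ρ ∧ a + 2 * h * t + h ≤ a + L := by
    intro t ht
    have h1 : (t : ℝ) + 1 ≤ M := by exact_mod_cast ht
    have h2 : a + 2 * h * t + h ≤ a + L := by nlinarith
    have h3 : a ≤ a + 2 * h * t := by
      have : 0 ≤ 2 * h * t := by positivity
      linarith
    obtain ⟨y, hy1, hy2, x, hx, u, hu, hr⟩ := hcon _ h3 h2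
    exact ⟨y, x, u, hy1, hy2, hx, hu, hr, h2⟩
  choose! y x u h1 h2 h3 h4 h5 h6 using key
  obtain ⟨t, ht, t', ht', hne, hxx⟩ := Finset.exists_ne_map_eq_of_card_lt_of_maps_to
    (s := Finset.range M) (t := X) (f := x) (by simpa using hM)
    (by intro t ht; exact h3 t (by simpa using ht))
  simp only [Finset.mem_range] at ht ht'
  have main : ∀ t t' : ℕ, t < M → t' < M → t < t' → x t = x t' → False := by
    intro t t' ht ht' hlt hxx
    have hc : (t : ℝ) + 1 ≤ t' := by exact_mod_cast hlt
    have hm : 2 * h * (t : ℝ) + 2 * h ≤ 2 * h * t' := by nlinarith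
    have a1 := h1 t ht
    have a2 := h2 t ht
    have a5 := abs_le.1 (h5 t ht)
    have a6 := h6 t ht
    have b1 := h1 t' ht'
    have b2 := h2 t' ht'
    have b5 := abs_le.1 (h5 t' ht')
    have b6 := h6 t' ht'
    have p1 : 0 ≤ 2 * h * (t : ℝ) := by positivity
    have p2 : 0 ≤ 2 * h * (t' : ℝ) := by positivity
    have := hS (x t) (h3 t ht) (u t) (h4 t ht) (u t') (hxx ▸ h4 t' ht')
      (by linarith) (by linarith) (by linarith) (by linarith)
    have := (abs_le.1 this).1
    linarith
  rcases lt_or_gt_of_ne hne with hlt | hlt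
  · exact main t t' ht ht' hlt hxx
  · exact main t' t ht' ht hlt hxx.symm

/-- distance to the nearest integer of `n * θ` -/
noncomputable def dn (θ : ℝ) (n : ℕ) : ℝ := |(n : ℝ) * θ - round ((n : ℝ) * θ)|

def BestDen (θ : ℝ) (T : ℕ) : Prop := 0 < T ∧ ∀ n : ℕ, 0 < n → n < T → dn θ T < dn θ n

lemma dn_le (θ : ℝ) (n : ℕ) (p : ℤ) : dn θ n ≤ |(n : ℝ) * θ - p| := round_le _ _

lemma dn_pos {θ : ℝ} (hθ : Irrational θ) {n : ℕ} (hn : 0 < n) : 0 < dn θ n := by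
  unfold dn
  rw [abs_pos, sub_ne_zero]
  exact (hθ.natCast_mul hn.ne').ne_int _

lemma dn_le_int (θ : ℝ) (n p : ℤ) : dn θ n.natAbs ≤ |(n : ℝ) * θ - p| := by
  rcases Int.natAbs_eq n with h | h
  · have := dn_le θ n.natAbs p
    have e : ((n.natAbs : ℕ) : ℝ) = (n : ℝ) := by rw [h]; simp
    rwa [e] at this
  · have := dn_le θ n.natAbs (-p)
    have e : ((n.natAbs : ℕ) : ℝ) = -(n : ℝ) := by rw [h]; simp
    rw [e] at this
    rw [← abs_neg]
    convert this using 2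
    push_cast; ring

lemma dirichlet (θ : ℝ) (N : ℕ) (hN : 1 < N) : ∃ k : ℕ, 0 < k ∧ k < N ∧ dn θ k ≤ 1 / N := by
  obtain ⟨k, hk, hk2, h⟩ := Real.exists_nat_abs_mul_sub_round_le θ (n := N - 1) (by omega)
  refine ⟨k, hk, by omega, ?_⟩
  have e : ((N - 1 : ℕ) : ℝ) + 1 = N := by
    rw [Nat.cast_sub (by omega)]; simp
  rw [e] at h
  exact h

lemma next_best {θ : ℝ} (hθ : Irrational θ) (T R : ℕ) (hT : BestDen θ T) (hR : 1 < R) :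
    ∃ (T' q : ℕ) (p : ℤ), BestDen θ T' ∧ R * T ≤ T' ∧ T ≤ q ∧ q < R * T ∧
      |(q : ℝ) * θ - p| ≤ 1 / T' ∧ 1 / (2 * T') ≤ |(q : ℝ) * θ - p| ∧
      ∀ n p' : ℤ, n ≠ 0 → n.natAbs < T' → |(q : ℝ) * θ - p| ≤ |(n : ℝ) * θ - p'| := by
  have hT0 := hT.1
  have hTR : T < R * T := by nlinarith
  obtain ⟨q, hq, hqmin⟩ := Finset.exists_min_image (Finset.Ico 1 (R * T)) (dn θ)
    ⟨T, by simp; omega⟩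
  simp only [Finset.mem_Ico] at hq hqmin
  have hTq : T ≤ q := by
    by_contra hlt
    have h1 := hT.2 q (by omega) (by omega)
    have h2 := hqmin T ⟨by omega, hTR⟩
    linarith
  have hex : ∃ n : ℕ, 0 < n ∧ dn θ n < dn θ q := by
    have hp := dn_pos hθ (show 0 < q by omega)
    obtain ⟨N, hN⟩ := exists_nat_one_div_lt hp
    obtain ⟨k, hk, _, hk2⟩ := dirichlet θ (N + 2) (by omega)
    refine ⟨k, hk, hk2.trans_lt (lt_of_le_of_lt ?_ hN)⟩
    push_cast
    apply one_div_le_one_div_of_le <;> [positivity; linarith]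
  classical
  set T' := Nat.find hex with hT'
  obtain ⟨hT'0, hT'q⟩ := Nat.find_spec hex
  rw [← hT'] at hT'0 hT'q
  have hmin : ∀ n : ℕ, 0 < n → n < T' → dn θ q ≤ dn θ n := by
    intro n hn hlt
    have := Nat.find_min hex hlt
    push Not at this
    exact this hn
  have hRT : R * T ≤ T' := by
    by_contra hlt
    have := hqmin T' ⟨by omega, by omega⟩
    linarith
  have hT'R : (0 : ℝ) < T' := by exact_mod_cast hT'0
  have hqlt : (q : ℝ) < T' := by exact_mod_cast (by omega : q < T')
  have hq0 : (0 : ℝ) < q := by exact_mod_cast (by omega : 0 < q)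
  refine ⟨T', q, round ((q : ℝ) * θ), ⟨hT'0, ?_⟩, hRT, hTq, hq.2, ?_, ?_, ?_⟩
  · intro n hn hlt
    exact hT'q.trans_le (hmin n hn hlt)
  · obtain ⟨k, hk, hk1, hk2⟩ := dirichlet θ T' (by omega)
    exact (hmin k hk hk1).trans hk2
  · have hlt : |(T' : ℝ) * θ - round ((T' : ℝ) * θ)| < |(q : ℝ) * θ - round ((q : ℝ) * θ)| := hT'q
    generalize round ((q : ℝ) * θ) = p at *
    generalize round ((T' : ℝ) * θ) = p' at *
    set e := (q : ℝ) * θ - p with he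
    set e' := (T' : ℝ) * θ - p' with he'
    have hdet : (q : ℝ) * p' - T' * p = T' * e - q * e' := by rw [he, he']; ring
    have hne : (q : ℤ) * p' - T' * p ≠ 0 := by
      intro h0
      have h0' : (q : ℝ) * p' - T' * p = 0 := by exact_mod_cast h0
      have h1 : (T' : ℝ) * e = q * e' := by linarith
      have h2 : (T' : ℝ) * |e| = q * |e'| := by
        have := congrArg abs h1
        rwa [abs_mul, abs_mul, abs_of_pos hT'R, abs_of_pos hq0] at this
      have := abs_nonneg e'
      nlinarith
    have h1 : (1 : ℝ) ≤ |(q : ℝ) * p' - T' * p| := by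
      have := Int.one_le_abs hne
      exact_mod_cast this
    have h2 : |(q : ℝ) * p' - T' * p| ≤ T' * |e| + q * |e'| := by
      rw [hdet]
      refine (abs_sub _ _).trans ?_
      rw [abs_mul, abs_mul, abs_of_pos hT'R, abs_of_pos hq0]
    rw [div_le_iff₀ (by positivity)]
    have := abs_nonneg e'
    nlinarith
  · intro n p' hn hlt
    exact (hmin n.natAbs (by omega) hlt).trans (dn_le_int θ n p')

lemma exists_best_ge {θ : ℝ} (hθ : Irrational θ) (N : ℕ) : ∃ T, BestDen θ T ∧ N ≤ T := by
  induction N with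
  | zero => exact ⟨1, ⟨by norm_num, by intros; omega⟩, by omega⟩
  | succ n ih =>
    obtain ⟨T, hT, hn⟩ := ih
    obtain ⟨T', _, _, h1, h2, _⟩ := next_best hθ T 2 hT (by norm_num)
    have := hT.1
    exact ⟨T', h1, by omega⟩

set_option maxHeartbeats 2000000 in
lemma step_aux {θ : ℝ} (hθ : Irrational θ) (X : Finset ℝ) (M : ℕ) (hX : X.card < M)
    (c A B : ℝ) (hA : 0 < A) (hB : 0 < B) (hM : 0 < M)
    (e1 : 2 * A + 4 * M ^ 2 * c + 16 * M ^ 2 * B < 1)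
    (e2 : 2 * M * (2 * A + 4 * B) < c) (e4 : 2 * M * c + 2 * (B / A) < 1 / 2)
    (e5 : 2 * (B / A) < c)
    (T : ℕ) (hT : BestDen θ T) (a : ℝ) :
    ∃ (T' : ℕ) (a' : ℝ), BestDen θ T' ∧ T < T' ∧ a ≤ a' ∧ a' + c / T' ≤ a + c / T ∧
      ∀ y, a' ≤ y → y ≤ a' + c / T' → ∀ x ∈ X, ∀ n p : ℤ, 2 * |n| < T' →
        y ≠ x + n * θ - p ∧ ((T : ℤ) ≤ 2 * |n| → B ≤ |(n : ℝ)| * |y - (x + n * θ - p)|) := by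
  obtain ⟨T', q, p, hT', hRT, hTq, hqR, hd1, hd2, hmin⟩ :=
    next_best hθ T (4 * M ^ 2) hT (by nlinarith)
  have hT0 : (0 : ℝ) < T := by exact_mod_cast hT.1
  have hT'0 : (0 : ℝ) < T' := by exact_mod_cast hT'.1
  have hMr : (1 : ℝ) ≤ M := by exact_mod_cast hM
  have hq0 : (0 : ℝ) < q := by exact_mod_cast (lt_of_lt_of_le hT.1 hTq)
  have hTqr : (T : ℝ) ≤ q := by exact_mod_cast hTq
  have hqRr : (q : ℝ) ≤ 4 * M ^ 2 * T := by exact_mod_cast hqR.le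
  have hRTr : 4 * (M : ℝ) ^ 2 * T ≤ T' := by exact_mod_cast hRT
  have hBA : 0 < B / A := by positivity
  have hc : 0 < c := by linarith
  set e := (q : ℝ) * θ - p with he
  have hd0 : 0 < |e| := lt_of_lt_of_le (by positivity) hd2
  -- step 1
  obtain ⟨a1, ha1, ha1', hfree1⟩ := pig_aux X M hX
    (fun x => {u | ∃ n r : ℤ, u = x + n * θ - r ∧ |(n : ℝ)| * |e| < A})
    a (c / T) (c / (2 * M * T)) (2 * A / T) (2 * B / T) (by positivity) (by positivity)
    (by
      rw [show 2 * A / T + 2 * (2 * B / T) = (2 * A + 4 * B) / (T : ℝ) by ring,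
        div_lt_div_iff₀ hT0 (by positivity)]
      nlinarith)
    (by apply le_of_eq; field_simp)
    (by
      rintro x hx u ⟨n, r, rfl, hn⟩ v ⟨n', r', rfl, hn'⟩ h1 h2 h3 h4
      have hnn : |((n - n' : ℤ) : ℝ)| * |e| ≤ 2 * A := by
        have : |((n - n' : ℤ) : ℝ)| ≤ |(n : ℝ)| + |(n' : ℝ)| := by
          push_cast; exact abs_sub _ _
        nlinarith
      have huv : x + n * θ - r - (x + n' * θ - r') = (n - n' : ℤ) * θ - (r - r' : ℤ) := by
        push_cast; ring
      have hf : |(n - n' : ℤ) * θ - (r - r' : ℤ)| ≤ (c + 4 * B) / T := by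
        rw [← huv, abs_le]
        have : (c + 4 * B) / (T : ℝ) = c / T + 2 * (2 * B / T) := by ring
        rw [this]
        constructor <;> linarith
      rw [huv]
      generalize n - n' = w at *
      generalize r - r' = z at *
      set f := (w : ℝ) * θ - z with hf'
      have hdet : (w : ℝ) * p - q * z = q * f - w * e := by rw [hf', he]; ring
      have hz : (w : ℤ) * p - q * z = 0 := by
        rw [← Int.abs_lt_one_iff]
        have h1 : |(w : ℝ) * p - q * z| ≤ q * |f| + |(w : ℝ)| * |e| := by
          rw [hdet]
          refine (abs_sub _ _).trans ?_
          rw [abs_mul, abs_mul, abs_of_pos hq0]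
        have h2 : (q : ℝ) * |f| ≤ 4 * M ^ 2 * T * ((c + 4 * B) / T) := by
          gcongr
        have h3 : 4 * M ^ 2 * T * ((c + 4 * B) / T) = 4 * M ^ 2 * c + 16 * M ^ 2 * B := by
          field_simp; ring
        have : |(w : ℝ) * p - q * z| < 1 := by linarith
        exact_mod_cast this
      have hz' : (w : ℝ) * p - q * z = 0 := by exact_mod_cast hz
      have h5 : (q : ℝ) * f = w * e := by linarith
      have h6 : (q : ℝ) * |f| = |(w : ℝ)| * |e| := by
        have := congrArg abs h5
        rwa [abs_mul, abs_mul, abs_of_pos hq0] at this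
      rw [le_div_iff₀ hT0]
      have := abs_nonneg f
      nlinarith)
  -- step 2
  have hdT : B * |e| / A ≤ (B / A) / T' := by
    rw [show B * |e| / A = (B / A) * |e| by ring, div_eq_mul_one_div (B / A)]
    gcongr
  obtain ⟨a2, ha2, ha2', hfree2⟩ := pig_aux X M hX
    (fun x => {u | ∃ n r : ℤ, u = x + n * θ - r ∧ 2 * |n| < T'})
    a1 (2 * M * c / T') (c / T') 0 (B * |e| / A) (by positivity) le_rfl
    (by
      have : 2 * ((B / A) / T') < c / T' := by
        rw [← mul_div_assoc]; gcongr
      linarith)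
    (by apply le_of_eq; ring)
    (by
      rintro x hx u ⟨n, r, rfl, hn⟩ v ⟨n', r', rfl, hn'⟩ h1 h2 h3 h4
      have huv : x + n * θ - r - (x + n' * θ - r') = (n - n' : ℤ) * θ - (r - r' : ℤ) := by
        push_cast; ring
      have hf : |(n - n' : ℤ) * θ - (r - r' : ℤ)| < 1 / (2 * T') := by
        have : 2 * M * c / T' + 2 * ((B / A) / T') < 1 / (2 * T') := by
          rw [show 2 * M * c / T' + 2 * ((B / A) / T') = (2 * M * c + 2 * (B / A)) / (T' : ℝ) by ring,
            show 1 / (2 * (T' : ℝ)) = (1 / 2) / T' by ring]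
          gcongr
        rw [← huv, abs_lt]
        constructor <;> linarith
      have hw : |n - n'| < T' := by
        have := abs_sub n n'
        omega
      rw [huv]
      generalize n - n' = w at *
      generalize r - r' = z at *
      by_cases hw0 : w = 0
      · subst hw0
        have hz : z = 0 := by
          rw [← Int.abs_lt_one_iff]
          have h1 : 1 / (2 * (T' : ℝ)) ≤ 1 := by
            rw [div_le_one (by positivity)]
            have : (1 : ℝ) ≤ T' := by exact_mod_cast hT'.1
            linarith
          have : |(z : ℝ)| < 1 := by
            simp only [Int.cast_zero, zero_mul, zero_sub, abs_neg] at hf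
            linarith
          exact_mod_cast this
        simp [hz]
      · have := hmin w z hw0 (by rw [Int.abs_eq_natAbs] at hw; omega)
        linarith)
  have hlen : 2 * M * c / T' ≤ c / (2 * M * T) := by
    rw [div_le_div_iff₀ hT'0 (by positivity)]
    calc 2 * M * c * (2 * M * T) = c * (4 * (M : ℝ) ^ 2 * T) := by ring
      _ ≤ c * T' := by gcongr
  have hsum : a1 + c / (2 * M * T) ≤ a + c / T := ha1'
  refine ⟨T', a2, hT', ?_, by linarith, by linarith, ?_⟩
  · have h1 := hT.1
    have h2 : 1 ≤ M ^ 2 := Nat.one_le_pow _ _ hM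
    have h3 : 4 * T ≤ 4 * M ^ 2 * T := by gcongr; omega
    omega
  intro y hy1 hy2 x hx n r hn
  by_cases hea : |(n : ℝ)| * |e| < A
  · have := hfree1 y (by linarith) (by linarith) x hx _ ⟨n, r, rfl, hea⟩
    have hBT : 0 < 2 * B / T := by positivity
    refine ⟨?_, ?_⟩
    · intro h
      rw [h] at this
      simp at this
      linarith
    · intro hTn
      have hTn' : (T : ℝ) ≤ 2 * |(n : ℝ)| := by exact_mod_cast hTn
      calc B = (T / 2) * (2 * B / T) := by field_simp
        _ ≤ |(n : ℝ)| * |y - (x + n * θ - r)| := by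
          apply mul_le_mul (by linarith) this.le hBT.le (abs_nonneg _)
  · push Not at hea
    have := hfree2 y hy1 hy2 x hx _ ⟨n, r, rfl, hn⟩
    have hBT : 0 < B * |e| / A := by positivity
    refine ⟨?_, ?_⟩
    · intro h
      rw [h] at this
      simp at this
      linarith
    · intro _
      calc B = A * (B / A) := by field_simp
        _ ≤ (|(n : ℝ)| * |e|) * (B / A) := by gcongr
        _ = |(n : ℝ)| * (B * |e| / A) := by ring
        _ ≤ _ := by gcongr

lemma consts (M : ℕ) (hM : 2 ≤ M) (B : ℝ) (h : B * (4096 * (M : ℝ) ^ 5) < 1) :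
    ∃ c A : ℝ, 0 < c ∧ 0 < A ∧ 2 * A + 4 * M ^ 2 * c + 16 * M ^ 2 * B < 1 ∧
     2 * M * (2 * A + 4 * B) < c ∧ 2 * M * c + 2 * (B / A) < 1 / 2 ∧ 2 * (B / A) < c := by
  have hm : (2 : ℝ) ≤ M := by exact_mod_cast hM
  set m : ℝ := (M : ℝ)
  have hm0 : 0 < m := by linarith
  set k := 1 / m with hk
  have hk0 : 0 < k := by positivity
  have hk1 : k ≤ 1 / 2 := by rw [hk]; gcongr
  have hmk : m * k = 1 := by rw [hk]; field_simp
  have hB' : B < k ^ 5 / 4096 := by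
    rw [hk, lt_div_iff₀ (by norm_num), div_pow, one_pow, lt_div_iff₀ (by positivity)]
    linarith
  have hk2 : k ^ 2 ≤ 1 / 4 := by nlinarith
  have hk3 : k ^ 3 ≤ 1 / 8 := by nlinarith [sq_nonneg k]
  have e3 : m ^ 2 * k ^ 5 = k ^ 3 := by
    rw [show m ^ 2 * k ^ 5 = (m * k) ^ 2 * k ^ 3 by ring, hmk]; ring
  have hBA : B / (k ^ 3 / 128) < k ^ 2 / 32 := by
    rw [div_lt_iff₀ (by positivity)]
    nlinarith
  have hk3' : 0 < k ^ 3 := by positivity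
  refine ⟨k ^ 2 / 16, k ^ 3 / 128, by positivity, by positivity, ?_, ?_, ?_, by linarith⟩
  · have : 4 * m ^ 2 * (k ^ 2 / 16) = 1 / 4 := by
      rw [show 4 * m ^ 2 * (k ^ 2 / 16) = (m * k) ^ 2 / 4 by ring, hmk]; norm_num
    have : m ^ 2 * B ≤ m ^ 2 * (k ^ 5 / 4096) := by gcongr
    have : m ^ 2 * (k ^ 5 / 4096) = k ^ 3 / 4096 := by rw [← e3]; ring
    nlinarith
  · have h1 : m * B ≤ m * (k ^ 5 / 4096) := by gcongr
    have h2 : m * (k ^ 5 / 4096) = k ^ 4 / 4096 := by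
      rw [show m * (k ^ 5 / 4096) = (m * k) * k ^ 4 / 4096 by ring, hmk]; ring
    have h3 : m * k ^ 3 = k ^ 2 := by
      rw [show m * k ^ 3 = (m * k) * k ^ 2 by ring, hmk]; ring
    have h4 : k ^ 4 ≤ k ^ 2 := by nlinarith [sq_nonneg k]
    have h5 : 0 < k ^ 2 := by positivity
    nlinarith
  · have : m * k ^ 2 = k := by
      rw [show m * k ^ 2 = (m * k) * k by ring, hmk]; ring
    nlinarith

lemma extend_irr {θ : ℝ} (hθ : Irrational θ) (X : Finset ℝ) (M : ℕ) (hX : X.card < M)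
    (hM : 2 ≤ M) (B : ℝ) (hB : 0 < B) (h : B * (4096 * (M : ℝ) ^ 5) < 1) (a b : ℝ) (hab : a < b) :
    ∃ y, a ≤ y ∧ y ≤ b ∧ ∃ N : ℕ, ∀ x ∈ X, ∀ n p : ℤ,
      y ≠ x + n * θ - p ∧ ((N : ℤ) ≤ |n| → B ≤ |(n : ℝ)| * |y - (x + n * θ - p)|) := by
  obtain ⟨c, A, hc, hA, e1, e2, e4, e5⟩ := consts M hM B h
  obtain ⟨N, hN⟩ := exists_nat_gt (c / (b - a))
  obtain ⟨T0, hT0, hNT⟩ := exists_best_ge hθ N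
  have hT0r : (0 : ℝ) < T0 := by exact_mod_cast hT0.1
  have hlen : c / T0 ≤ b - a := by
    have : (N : ℝ) ≤ T0 := by exact_mod_cast hNT
    rw [div_lt_iff₀ (by linarith)] at hN
    rw [div_le_iff₀ hT0r]
    nlinarith
  have hstep := step_aux hθ X M hX c A B hA hB (by omega) e1 e2 e4 e5
  have hs : ∀ s : {s : ℕ × ℝ // BestDen θ s.1}, ∃ s' : {s : ℕ × ℝ // BestDen θ s.1},
      s.1.1 < s'.1.1 ∧ s.1.2 ≤ s'.1.2 ∧ s'.1.2 + c / s'.1.1 ≤ s.1.2 + c / s.1.1 ∧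
      ∀ y, s'.1.2 ≤ y → y ≤ s'.1.2 + c / s'.1.1 → ∀ x ∈ X, ∀ n p : ℤ, 2 * |n| < s'.1.1 →
        y ≠ x + n * θ - p ∧ ((s.1.1 : ℤ) ≤ 2 * |n| → B ≤ |(n : ℝ)| * |y - (x + n * θ - p)|) := by
    rintro ⟨⟨T, a⟩, hT⟩
    obtain ⟨T', a', h1, h2⟩ := hstep T hT a
    exact ⟨⟨⟨T', a'⟩, h1⟩, h2⟩
  choose f hf1 hf2 hf3 hf4 using hs
  let S : ℕ → {s : ℕ × ℝ // BestDen θ s.1} := fun j => f^[j] ⟨⟨T0, a⟩, hT0⟩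
  have hS0 : S 0 = ⟨⟨T0, a⟩, hT0⟩ := rfl
  have hS : ∀ j, S (j + 1) = f (S j) := fun j => Function.iterate_succ_apply' f j _
  have hmonoT : StrictMono (fun j => (S j).1.1) := strictMono_nat_of_lt_succ (by
    intro j
    show (S j).1.1 < (S (j + 1)).1.1
    rw [hS]; exact hf1 _)
  have hlo : Monotone (fun j => (S j).1.2) := monotone_nat_of_le_succ (by
    intro j
    show (S j).1.2 ≤ (S (j + 1)).1.2
    rw [hS]; exact hf2 _)
  have hhi : Antitone (fun j => (S j).1.2 + c / (S j).1.1) := antitone_nat_of_succ_le (by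
    intro j
    show (S (j + 1)).1.2 + c / (S (j + 1)).1.1 ≤ (S j).1.2 + c / (S j).1.1
    rw [hS]; exact hf3 _)
  have hle : ∀ j, (S j).1.2 ≤ (S j).1.2 + c / (S j).1.1 := by
    intro j
    have : 0 ≤ c / ((S j).1.1 : ℝ) := by positivity
    linarith
  have hmem := hlo.ciSup_mem_iInter_Icc_of_antitone hhi hle
  set y := ⨆ j, (S j).1.2
  rw [Set.mem_iInter] at hmem
  have hy0 := hmem 0
  refine ⟨y, hy0.1, ?_, T0, ?_⟩
  · have : y ≤ a + c / T0 := hy0.2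
    linarith
  intro x hx n p
  have hbig : ∃ j, 2 * |n| < (S j).1.1 := by
    refine ⟨(2 * |n|).toNat + 1, ?_⟩
    have := hmonoT.id_le ((2 * |n|).toNat + 1)
    simp only [id] at this
    omega
  classical
  set j := Nat.find hbig with hj
  have hjs := Nat.find_spec hbig
  rw [← hj] at hjs
  constructor
  · have hj1 : 2 * |n| < (S (j + 1)).1.1 := by
      have := hmonoT (Nat.lt_succ_self j)
      simp only [Nat.succ_eq_add_one] at this
      omega
    have hm := hmem (j + 1)
    rw [hS] at hj1 hm
    exact (hf4 (S j) y hm.1 hm.2 x hx n p hj1).1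
  · intro hn
    have hj0 : j ≠ 0 := by
      intro h0
      rw [h0, hS0] at hjs
      simp only at hjs
      have := abs_nonneg n
      omega
    obtain ⟨i, hi⟩ := Nat.exists_eq_succ_of_ne_zero hj0
    have hlt := Nat.find_min hbig (m := i) (by omega)
    have hm := hmem (i + 1)
    rw [hi, Nat.succ_eq_add_one, hS] at hjs
    rw [hS] at hm
    exact (hf4 (S i) y hm.1 hm.2 x hx n p hjs).2 (by omega)

lemma extend_rat (r : ℚ) (X : Finset ℝ) (B : ℝ) (a b : ℝ) (hab : a < b) :
    ∃ y, a ≤ y ∧ y ≤ b ∧ ∃ N : ℕ, ∀ x ∈ X, ∀ n p : ℤ,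
      y ≠ x + n * (r : ℝ) - p ∧ ((N : ℤ) ≤ |n| → B ≤ |(n : ℝ)| * |y - (x + n * (r : ℝ) - p)|) := by
  have hcount : (⋃ x ∈ X, Set.range (fun t : ℤ => x + (t : ℝ) / r.den)).Countable :=
    (Finset.countable_toSet X).biUnion (fun x _ => Set.countable_range _)
  obtain ⟨y, hy, hyab⟩ := (hcount.dense_compl ℝ).exists_between hab
  have hs : (0 : ℝ) < r.den := by exact_mod_cast r.den_pos
  have hne : ∀ x ∈ X, ∀ t : ℤ, y ≠ x + (t : ℝ) / r.den := by
    intro x hx t h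
    apply hy
    simp only [Set.mem_iUnion]
    exact ⟨x, hx, t, h.symm⟩
  have hform : ∀ (x : ℝ) (n p : ℤ), x + n * (r : ℝ) - p =
      x + ((n * r.num - p * r.den : ℤ) : ℝ) / r.den := by
    intro x n p
    have : (r : ℝ) = r.num / r.den := by exact_mod_cast (Rat.num_div_den r).symm
    rw [this]; push_cast; field_simp; ring
  have hN : ∀ x ∈ X, ∃ N : ℕ, ∀ n p : ℤ, (N : ℤ) ≤ |n| →
      B ≤ |(n : ℝ)| * |y - (x + n * (r : ℝ) - p)| := by
    intro x hx
    set w := (r.den : ℝ) * (y - x) with hw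
    have key : ∀ t : ℤ, |y - (x + (t : ℝ) / r.den)| = |w - t| / r.den := by
      intro t
      rw [← abs_of_pos hs, ← abs_div, abs_of_pos hs]
      congr 1
      rw [hw]; field_simp; ring
    have hpos : 0 < |w - round w| / r.den := by
      rw [← key, abs_pos, sub_ne_zero]
      exact hne x hx _
    obtain ⟨N, hN⟩ := exists_nat_gt (B / (|w - round w| / r.den))
    rw [div_lt_iff₀ hpos] at hN
    refine ⟨N, fun n p hn => hN.le.trans ?_⟩
    rw [hform, key]
    have h1 : (N : ℝ) ≤ |(n : ℝ)| := by exact_mod_cast hn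
    have h2 := round_le w (n * r.num - p * r.den)
    gcongr
  choose! N hN using hN
  refine ⟨y, hyab.1.le, hyab.2.le, X.sup N, fun x hx n p => ⟨?_, fun hn => ?_⟩⟩
  · rw [hform]; exact hne x hx _
  · apply hN x hx n p
    have : N x ≤ X.sup N := Finset.le_sup hx
    omega

lemma bad_of (B θ x y : ℝ) (N : ℕ) (h : ∀ n p : ℤ, y ≠ x + n * θ - p ∧
    ((N : ℤ) ≤ |n| → B ≤ |(n : ℝ)| * |y - (x + n * θ - p)|)) :
    BadlyApproximablePair B θ (x : AddCircle (1 : ℝ)) (y : AddCircle (1 : ℝ)) := by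
  have key : ∀ k : ℤ, ∃ p : ℤ, dist ((x : AddCircle (1 : ℝ)) + k • ((θ : ℝ) : AddCircle (1 : ℝ)))
      (y : AddCircle (1 : ℝ)) = |y - (x + k * θ - p)| := by
    intro k
    refine ⟨round (x + k * θ - y), ?_⟩
    rw [dist_eq_norm]
    have : (x : AddCircle (1 : ℝ)) + k • ((θ : ℝ) : AddCircle (1 : ℝ)) - (y : AddCircle (1 : ℝ))
        = ((x + k * θ - y : ℝ) : AddCircle (1 : ℝ)) := by
      push_cast
      rw [← zsmul_eq_mul]
      rfl
    rw [this, UnitAddCircle.norm_eq, ← abs_neg]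
    congr 1
    ring
  refine ⟨⟨N, fun k hk => ?_⟩, fun k _ he => ?_⟩
  · obtain ⟨p, hp⟩ := key k
    rw [hp]
    have hk0 : (0 : ℝ) ≤ k := by exact_mod_cast (le_trans (by positivity) hk : (0 : ℤ) ≤ k)
    have := (h k p).2 (hk.trans (le_abs_self k))
    rwa [abs_of_nonneg hk0] at this
  · obtain ⟨p, hp⟩ := key k
    rw [he, dist_self] at hp
    exact (h k p).1 (by linarith [abs_eq_zero.1 hp.symm])

lemma bad_of_symm (B θ x y : ℝ) (N : ℕ) (h : ∀ n p : ℤ, y ≠ x + n * θ - p ∧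
    ((N : ℤ) ≤ |n| → B ≤ |(n : ℝ)| * |y - (x + n * θ - p)|)) :
    BadlyApproximablePair B θ (y : AddCircle (1 : ℝ)) (x : AddCircle (1 : ℝ)) := by
  apply bad_of B θ y x N
  intro n p
  obtain ⟨h1, h2⟩ := h (-n) (-p)
  push_cast at h1 h2
  refine ⟨fun he => h1 (by linarith), fun hn => ?_⟩
  have := h2 (by simpa using hn)
  rw [abs_neg] at this
  convert this using 2
  rw [← abs_neg]
  congr 1
  ring

lemma extend_circle (θ : ℝ) (k : ℕ) (hk : 2 ≤ k) (B : ℝ) (hB : 0 < B)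
    (h : B * (4096 * (k : ℝ) ^ 5) < 1) (X : Finset (AddCircle (1 : ℝ))) (hX : X.card < k)
    (U : Set (AddCircle (1 : ℝ))) (hU : IsOpen U) (z : AddCircle (1 : ℝ)) (hz : z ∈ U) :
    ∃ y ∈ U, ∀ x ∈ X, BadlyApproximablePair B θ x y ∧ BadlyApproximablePair B θ y x := by
  classical
  obtain ⟨w, rfl⟩ := QuotientAddGroup.mk_surjective z
  have hV : IsOpen ((fun t : ℝ => (t : AddCircle (1 : ℝ))) ⁻¹' U) :=
    hU.preimage (AddCircle.continuous_mk' 1)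
  obtain ⟨ε, hε, hball⟩ := Metric.isOpen_iff.1 hV w hz
  let g : AddCircle (1 : ℝ) → ℝ := Function.surjInv QuotientAddGroup.mk_surjective
  have hg : ∀ x, ((g x : ℝ) : AddCircle (1 : ℝ)) = x := Function.surjInv_eq _
  have hX' : (X.image g).card < k := Finset.card_image_le.trans_lt hX
  have main : ∃ y, w ≤ y ∧ y ≤ w + ε / 2 ∧ ∃ N : ℕ, ∀ x ∈ X.image g, ∀ n p : ℤ,
      y ≠ x + n * θ - p ∧ ((N : ℤ) ≤ |n| → B ≤ |(n : ℝ)| * |y - (x + n * θ - p)|) := by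
    by_cases hθ : Irrational θ
    · exact extend_irr hθ _ k hX' hk B hB h w (w + ε / 2) (by linarith)
    · unfold Irrational at hθ
      push Not at hθ
      obtain ⟨r, rfl⟩ := hθ
      exact extend_rat r _ B w (w + ε / 2) (by linarith)
  obtain ⟨y, hy1, hy2, N, hN⟩ := main
  refine ⟨(y : AddCircle (1 : ℝ)), hball ?_, fun x hx => ?_⟩
  · rw [Metric.mem_ball, Real.dist_eq, abs_lt]
    constructor <;> linarith
  · have := hN (g x) (Finset.mem_image_of_mem _ hx)
    rw [← hg x]
    exact ⟨bad_of _ _ _ _ _ this, bad_of_symm _ _ _ _ _ this⟩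

lemma const_bound (k : ℕ) (hk : 2 ≤ k) :
    (1 / 64 : ℝ) ^ (3 * (k - 1)) * (4096 * (k : ℝ) ^ 5) < 1 := by
  obtain ⟨m, rfl⟩ : ∃ m, k = m + 2 := ⟨k - 2, by omega⟩
  have hn : 4096 * (m + 2) ^ 5 < 64 ^ (3 * (m + 1)) := by
    have h1 : m + 2 ≤ 2 ^ (m + 1) := Nat.lt_two_pow_self
    calc 4096 * (m + 2) ^ 5 ≤ 4096 * (2 ^ (m + 1)) ^ 5 := by gcongr
      _ = 2 ^ (12 + 5 * (m + 1)) := by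
        rw [← pow_mul, pow_add, mul_comm (m + 1) 5]; norm_num
      _ < 2 ^ (6 * (3 * (m + 1))) := Nat.pow_lt_pow_right (by norm_num) (by omega)
      _ = 64 ^ (3 * (m + 1)) := by rw [pow_mul]; norm_num
  have hr : 4096 * ((m + 2 : ℕ) : ℝ) ^ 5 < 64 ^ (3 * (m + 1)) := by exact_mod_cast hn
  rw [show m + 2 - 1 = m + 1 by omega, one_div, inv_pow, inv_mul_lt_iff₀ (by positivity), mul_one]
  exact hr

theorem dense_pairwise_badly_approximable_tuples (θ : ℝ) (k : ℕ) (hk : 1 ≤ k) :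
    Dense {p : Fin k → AddCircle (1 : ℝ) |
      ∀ i j : Fin k, i ≠ j →
        BadlyApproximablePair ((1 / 64 : ℝ) ^ (3 * (k - 1))) θ (p i) (p j)} := by
  classical
  by_cases hk2 : 2 ≤ k
  swap
  · have hk1 : k = 1 := by omega
    subst hk1
    have : {p : Fin 1 → AddCircle (1 : ℝ) | ∀ i j : Fin 1, i ≠ j →
        BadlyApproximablePair ((1 / 64 : ℝ) ^ (3 * (1 - 1))) θ (p i) (p j)} = Set.univ := by
      ext p
      simp only [Set.mem_setOf_eq, Set.mem_univ, iff_true]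
      intro i j hij
      exact absurd (Subsingleton.elim i j) hij
    rw [this]
    exact dense_univ
  rw [dense_iff_inter_open]
  rintro V hV ⟨p0, hp0⟩
  obtain ⟨u, hu, huV⟩ := isOpen_pi_iff'.1 hV p0 hp0
  have hB := const_bound k hk2
  have hB0 : (0 : ℝ) < (1 / 64 : ℝ) ^ (3 * (k - 1)) := by positivity
  set B := (1 / 64 : ℝ) ^ (3 * (k - 1))
  have main : ∀ m : ℕ, m ≤ k → ∃ p : Fin k → AddCircle (1 : ℝ), (∀ i, p i ∈ u i) ∧
      ∀ i j : Fin k, i.1 < m → j.1 < m → i ≠ j → BadlyApproximablePair B θ (p i) (p j) := by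
    intro m
    induction m with
    | zero => exact fun _ => ⟨p0, fun i => (hu i).2, fun i j hi => by omega⟩
    | succ m ih =>
      intro hm
      obtain ⟨p, hp, hbad⟩ := ih (by omega)
      let l : Fin k := ⟨m, by omega⟩
      have hcard : ((Finset.univ.erase l).image p).card < k := by
        refine Finset.card_image_le.trans_lt ?_
        rw [Finset.card_erase_of_mem (Finset.mem_univ _), Finset.card_univ, Fintype.card_fin]
        omega
      obtain ⟨y, hy, hyb⟩ := extend_circle θ k hk2 B hB0 hB _ hcard (u l) (hu l).1 (p0 l) (hu l).2
      have hyb' : ∀ i, i ≠ l → BadlyApproximablePair B θ (p i) y ∧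
          BadlyApproximablePair B θ y (p i) := fun i hi =>
        hyb _ (Finset.mem_image_of_mem _ (Finset.mem_erase.2 ⟨hi, Finset.mem_univ _⟩))
      refine ⟨Function.update p l y, fun i => ?_, fun i j hi hj hij => ?_⟩
      · by_cases h : i = l
        · subst h; simpa using hy
        · simpa [Function.update_of_ne h] using hp i
      · have hlt : ∀ i : Fin k, i.1 < m + 1 → i ≠ l → i.1 < m := by
          intro i hi hne
          have : i.1 ≠ m := fun h => hne (Fin.ext h)
          omega
        by_cases h : i = l
        · have hj' : j ≠ l := fun h' => hij (h.trans h'.symm)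
          rw [h, Function.update_self, Function.update_of_ne hj']
          exact (hyb' j hj').2
        · by_cases h' : j = l
          · rw [h', Function.update_self, Function.update_of_ne h]
            exact (hyb' i h).1
          · rw [Function.update_of_ne h, Function.update_of_ne h']
            exact hbad i j (hlt i hi h) (hlt j hj h') hij
  obtain ⟨p, hp, hbad⟩ := main k le_rfl
  exact ⟨p, huV (fun i _ => hp i), fun i j hij => hbad i j i.2 j.2 hij⟩
end

section
/- Let φ = (1 + √5)/2. There exists B > 0 such that for every ξ ∈ ℝ of the form ξ = (aφ + b)/(cφ + d) with a, b, c, d ∈ ℤ and |ad − bc| = 1, the following hold: ξ is irrational, and there exists N ∈ ℕ such that n·dist(nξ, 0) ≥ B for all integers n ≥ N, where dist(nξ, 0) denotes the distance in ℝ/ℤ from the class of nξ to 0 (equivalently, the distance from nξ to the nearest integer). In other words, the pair (0,0) is B-badly approximable for the rotation R_ξ, with B uniform over all such ξ. -/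
theorem aux_lin {r : ℝ} (hr : Irrational r) (u v : ℤ) (h : (u : ℝ) * r + v = 0) : u = 0 ∧ v = 0 := by
  have hu : u = 0 := by
    by_contra hu
    apply hr
    refine ⟨-(v : ℚ) / u, ?_⟩
    have : (u : ℝ) ≠ 0 := by exact_mod_cast hu
    push_cast
    field_simp
    linarith
  subst hu
  simpa using h

theorem aux_det {a b c d n m : ℤ} (h : |a * d - b * c| = 1) (h1 : n * a - m * c = 0)
    (h2 : n * b - m * d = 0) : n = 0 := by
  have h3 : n * (a * d - b * c) = 0 := by linear_combination d * h1 - c * h2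
  rcases mul_eq_zero.1 h3 with h4 | h4
  · exact h4
  · rw [h4] at h; simp at h

theorem aux_main {f g s : ℝ} (hf : Irrational f) (hg : Irrational g) (hsum : f + g = 1)
    (hprod : f * g = -1) (hs : f - g = s) (hs0 : 0 ≤ s) (hs1 : s ≤ 5 / 2) (a b c d : ℤ)
    (h : |a * d - b * c| = 1) (n m : ℤ) (hn : 0 < n)
    (hnD : |(c * f + d) * (c * g + d)| ≤ (n : ℝ)) (e : ℝ)
    (he : e = n * ((a * f + b) / (c * f + d)) - m) (he2 : |e| ≤ 1 / 2) : 1 / 3 ≤ n * |e| := by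
  have hD : (c : ℝ) * f + d ≠ 0 := by
    intro h0
    obtain ⟨rfl, rfl⟩ := aux_lin hf c d h0
    simp at h
  have hu : ¬ (n * a - m * c = 0 ∧ n * b - m * d = 0) := fun hh =>
    hn.ne' (aux_det h hh.1 hh.2)
  obtain ⟨u, hu'⟩ : ∃ u, u = n * a - m * c := ⟨_, rfl⟩
  obtain ⟨v, hv'⟩ : ∃ v, v = n * b - m * d := ⟨_, rfl⟩
  rw [← hu', ← hv'] at hu
  have h1 : (u : ℝ) * f + v ≠ 0 := fun h0 => hu (aux_lin hf u v h0)
  have h2 : (u : ℝ) * g + v ≠ 0 := fun h0 => hu (aux_lin hg u v h0)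
  have hN : ((u : ℝ) * f + v) * (u * g + v) = ((v ^ 2 + u * v - u ^ 2 : ℤ) : ℝ) := by
    push_cast
    linear_combination (u : ℝ) ^ 2 * hprod + u * v * hsum
  have hNZ : (v ^ 2 + u * v - u ^ 2 : ℤ) ≠ 0 := by
    intro h0
    rw [h0] at hN
    exact mul_ne_zero h1 h2 (by simpa using hN)
  have hN1 : (1 : ℝ) ≤ |((u : ℝ) * f + v) * (u * g + v)| := by
    rw [hN]
    exact_mod_cast Int.one_le_abs hNZ
  have hu2 : (u : ℝ) = n * a - m * c := by rw [hu']; push_cast; ring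
  have hv2 : (v : ℝ) = n * b - m * d := by rw [hv']; push_cast; ring
  have heD : e * (c * f + d) = n * (a * f + b) - m * (c * f + d) := by
    rw [he, sub_mul, mul_assoc, div_mul_cancel₀ _ hD]
  have key : ((u : ℝ) * f + v) * (u * g + v) =
      e * (-(n * ((a * d - b * c : ℤ) : ℝ) * s)) + e ^ 2 * ((c * f + d) * (c * g + d)) := by
    have k1 : (u : ℝ) * f + v = e * (c * f + d) := by rw [heD, hu2, hv2]; ring
    have k2 : (c * f + d) * ((u : ℝ) * g + v) =
        -(n * ((a * d - b * c : ℤ) : ℝ) * s) + e * (c * f + d) * (c * g + d) := by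
      rw [heD, hu2, hv2, ← hs]; push_cast; ring
    rw [k1]
    linear_combination e * k2
  rw [key] at hN1
  have hn' : (0 : ℝ) < n := by exact_mod_cast hn
  have hd : |((a * d - b * c : ℤ) : ℝ)| = 1 := by exact_mod_cast h
  have t1 : |e * (-(n * ((a * d - b * c : ℤ) : ℝ) * s))| = |e| * (n * s) := by
    rw [abs_mul, abs_neg, abs_mul, abs_mul, hd, abs_of_pos hn', abs_of_nonneg hs0]; ring
  have t2 : |e ^ 2 * ((c * f + d) * (c * g + d))| ≤ (|e| * (1 / 2)) * n := by
    rw [abs_mul, abs_pow, pow_two]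
    gcongr
  have t3 := abs_add_le (e * (-(n * ((a * d - b * c : ℤ) : ℝ) * s)))
    (e ^ 2 * ((c * f + d) * (c * g + d)))
  have t4 : |e| * (n * s) ≤ |e| * (n * (5 / 2)) := by gcongr
  nlinarith

/-- Claim in the proof of Proposition 3.12 of the paper: there is a uniform `B > 0`
such that for every real `ξ = (aφ + b)/(cφ + d)` with `a, b, c, d ∈ ℤ`,
`|ad - bc| = 1` and `φ = (1 + √5)/2` (i.e. every `ξ` whose continued fraction
expansion terminates in all 1's), `ξ` is irrational and the pair `(0,0)` is
`B`-badly approximable for the rotation `R_ξ`: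
there is `N ∈ ℕ` with `n · dist(nξ, 0) ≥ B` in `ℝ/ℤ` for all integers `n ≥ N`. -/
theorem golden_ratio_rotations_uniformly_badly_approximable :
    ∃ B : ℝ, 0 < B ∧
      ∀ ξ : ℝ,
        (∃ a b c d : ℤ, |a * d - b * c| = 1 ∧
          ξ = ((a : ℝ) * ((1 + Real.sqrt 5) / 2) + (b : ℝ)) /
              ((c : ℝ) * ((1 + Real.sqrt 5) / 2) + (d : ℝ))) →
        Irrational ξ ∧
        ∃ N : ℕ, ∀ n : ℤ, (N : ℤ) ≤ n →
          B ≤ (n : ℝ) * dist (n • ((ξ : ℝ) : AddCircle (1 : ℝ))) 0 := by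
  have hf : Irrational ((1 + Real.sqrt 5) / 2) := Real.goldenRatio_irrational
  have hg : Irrational ((1 - Real.sqrt 5) / 2) := Real.goldenConj_irrational
  have h5 : Real.sqrt 5 * Real.sqrt 5 = 5 := Real.mul_self_sqrt (by norm_num)
  refine ⟨1 / 3, by norm_num, ?_⟩
  rintro ξ ⟨a, b, c, d, h, rfl⟩
  constructor
  · rintro ⟨q, hq⟩
    have hD : (c : ℝ) * ((1 + Real.sqrt 5) / 2) + d ≠ 0 := by
      intro h0
      obtain ⟨rfl, rfl⟩ := aux_lin hf c d h0
      simp at h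
    rw [eq_div_iff hD, Rat.cast_def] at hq
    have hq0 : (q.den : ℝ) ≠ 0 := by exact_mod_cast q.den_ne_zero
    rw [div_mul_eq_mul_div, div_eq_iff hq0] at hq
    have := aux_lin hf ((q.den : ℤ) * a - q.num * c) ((q.den : ℤ) * b - q.num * d)
      (by push_cast; linear_combination -hq)
    have h0 := aux_det h this.1 this.2
    exact q.den_ne_zero (by exact_mod_cast h0)
  · obtain ⟨N, hN⟩ := exists_nat_ge |((c : ℝ) * ((1 + Real.sqrt 5) / 2) + d) *
      (c * ((1 - Real.sqrt 5) / 2) + d)|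
    refine ⟨N + 1, fun n hn => ?_⟩
    have hn0 : 0 < n := by push_cast at hn; omega
    have hNn : (N : ℝ) ≤ n := by
      have : (N : ℤ) ≤ n := by push_cast at hn; omega
      exact_mod_cast this
    rw [dist_zero_right, ← AddCircle.coe_zsmul, UnitAddCircle.norm_eq, zsmul_eq_mul]
    refine aux_main hf hg (by ring) (by linear_combination -h5 / 4) (s := Real.sqrt 5) (by ring)
      (Real.sqrt_nonneg 5) ?_ a b c d h n _ hn0 (hN.trans hNn) _ rfl (abs_sub_round _)
    rw [Real.sqrt_le_left (by norm_num)]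
    norm_num
end

section
/- Let X be a topological space, S ⊆ X a subset, and U : S → ℕ → Set X a family of sets such that: (a) for every p ∈ S and n ∈ ℕ, U(p,n) is open in X and p ∈ U(p,n); (b) for every p ∈ S and n ∈ ℕ, U(p,n+1) ⊆ U(p,n); (c) for every p ∈ S, the sets U(p,n), n ∈ ℕ, form a neighbourhood basis at p, i.e. every open set containing p contains some U(p,n); (d) for all p, q ∈ S and n ∈ ℕ, if q ∈ U(p,n) then U(q,i) ⊆ U(p,i) for all i ≤ n; (e) for every p ∈ S and n ∈ ℕ there exists m ≥ n such that every q ∈ S ∩ U(p,m) can be joined to p by a path contained in S ∩ U(p,n), i.e. there is a continuous c : [0,1] → X with c(0) = p, c(1) = q, and image contained in S ∩ U(p,n). Then for every p ∈ S and every n ∈ ℕ there is a set W with p ∈ W ⊆ S ∩ U(p,n) that is open in the subspace topology of S and path-connected; consequently S (with the subspace topology) is locally path-connected. -/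
/-- Abstract mechanism of Section 6 of the paper (local path-connectivity).  Given a
subset `S` of a topological space `X` and, for each `p ∈ S`, a decreasing family of
open neighbourhoods `U p n` forming a neighbourhood basis at `p`, satisfying the
nesting compatibility (d) and the path-joining property (e), every `p ∈ S` and `n`
admit a path-connected set `W` with `p ∈ W ⊆ S ∩ U p n` which is open in the
subspace topology of `S`; consequently `S` is locally path-connected. -/
theorem locally_path_connected_of_nested_neighbourhoods
    {X : Type*} [TopologicalSpace X] (S : Set X) (U : S → ℕ → Set X)
    (ha : ∀ (p : S) (n : ℕ), IsOpen (U p n) ∧ (p : X) ∈ U p n)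
    (hb : ∀ (p : S) (n : ℕ), U p (n + 1) ⊆ U p n)
    (hc : ∀ (p : S) (V : Set X), IsOpen V → (p : X) ∈ V → ∃ n : ℕ, U p n ⊆ V)
    (hd : ∀ (p q : S) (n : ℕ), (q : X) ∈ U p n → ∀ i ≤ n, U q i ⊆ U p i)
    (he : ∀ (p : S) (n : ℕ), ∃ m : ℕ, n ≤ m ∧
      ∀ q : S, (q : X) ∈ U p m → JoinedIn (S ∩ U p n) (p : X) (q : X)) :
    (∀ (p : S) (n : ℕ), ∃ W : Set X,
      (p : X) ∈ W ∧ W ⊆ S ∩ U p n ∧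
      IsOpen (Subtype.val ⁻¹' W : Set S) ∧ IsPathConnected W) ∧
    LocPathConnectedSpace S := by
  have key : ∀ (p : S) (n : ℕ), ∃ W : Set X,
      (p : X) ∈ W ∧ W ⊆ S ∩ U p n ∧
      IsOpen (Subtype.val ⁻¹' W : Set S) ∧ IsPathConnected W := by
    intro p n
    have hp : (p : X) ∈ S ∩ U p n := ⟨p.2, (ha p n).2⟩
    refine ⟨pathComponentIn (S ∩ U p n) p, mem_pathComponentIn_self hp,
      pathComponentIn_subset, ?_, isPathConnected_pathComponentIn hp⟩
    rw [isOpen_iff_mem_nhds]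
    intro q hq
    have hqU : (q : X) ∈ U p n := (pathComponentIn_subset hq).2
    obtain ⟨m, -, hm⟩ := he q n
    have hn : (Subtype.val ⁻¹' (U q m) : Set S) ∈ nhds q :=
      ((ha q m).1.preimage continuous_subtype_val).mem_nhds (ha q m).2
    refine Filter.mem_of_superset hn ?_
    intro r hr
    have h1 : JoinedIn (S ∩ U p n) (p : X) q := hq
    exact h1.trans ((hm r hr).mono (Set.inter_subset_inter_right S (hd p q n hqU n le_rfl)))
  refine ⟨key, ⟨fun p => ?_⟩⟩
  rw [Filter.hasBasis_iff]
  intro t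
  constructor
  · intro ht
    obtain ⟨V, hV, hVt⟩ := mem_nhds_subtype S p t |>.1 ht
    obtain ⟨V', hV'V, hV'o, hpV'⟩ := mem_nhds_iff.1 hV
    obtain ⟨n, hn⟩ := hc p V' hV'o hpV'
    obtain ⟨W, hpW, hWs, hWo, hWc⟩ := key p n
    refine ⟨Subtype.val ⁻¹' W, ⟨hWo.mem_nhds hpW, ?_⟩, ?_⟩
    · exact hWc.preimage_coe (fun x hx => (hWs hx).1)
    · intro x hx
      exact hVt (hV'V (hn (hWs hx).2))
  · rintro ⟨i, ⟨hi, -⟩, hit⟩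
    exact Filter.mem_of_superset hi hit
end
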